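/- arXiv:1403.7977 — 6 statements merged into one kernel-verified Lean document; each statement's English description precedes it below -/
import Mathlib

section
/- The set of degrees of irreducible complex characters of G = C ⋊ Γ is exactly the set of positive divisors of e with 2 removed: cd(G) = {n : n ∣ e} \ {2}. -/
/-! For finite abelian `C` and `Γ`, the degrees of the irreducible representations of `C ⋊ Γ` are
exactly the sizes of the orbits `Γχ` of `Γ` on the characters `χ : C →* ℂˣ`:

* In an irreducible representation pick a weight `χ` of `C`. The stabilizer of `χ` in `Γ` acts on
  the `χ`-weight space by commuting operators, so there is a common eigenvector `w`. The
  `Γ`-translates of `w` span an invariant subspace, and, choosing one translate for each element of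
  `Γχ`, give a basis, since vectors of distinct weights are independent
  (`exists_finrank_eq_card_orbit`).
* Conversely `C ⋊ Γ` acts monomially on the functions on the orbit `Γχ` (`orbitRep`). An
  equivariant endomorphism preserves the one-dimensional weight spaces, and transitivity forces it
  to be a scalar (`orbitRep_endo`), so this representation is simple.

Here `Γ` is generated by the Frobenius `x ↦ x ^ q`, so the orbit of `χ` has size the least `d ≥ 1`
with `χ ^ (q ^ d - 1) = 1`; it divides `e`. It is never `2`: as `q + 1 = 2 ^ p` and `4 ∤ |C|`,
`gcd (|C|, q ^ 2 - 1)` divides `q - 1` (`gcd_sq_sub_one_dvd`). For `n ∣ e` with `n ≠ 2`, a character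
of order `t = gcd (|C|, q ^ n - 1)` has orbit of size exactly `n`. Otherwise `t ∣ q ^ (n / l) - 1`
for some prime `l ∣ n`. But `(q ^ n - 1) / (q ^ (n / l) - 1)` has a prime factor `r ∤ q - 1`
(`exists_prime_dvd_geom_sum`, a substitute for Zsigmondy's theorem), and the full power of such an
`r` in `q ^ n - 1` divides `|C|`, hence `t`: a contradiction.
-/

open CategoryTheory

/-! ### Arithmetic of Mersenne primes -/

/-- A common divisor of `q ^ 2 - 1` and of a number not divisible by `4` divides `q - 1`, because
`q - 1` is twice an odd number and `q + 1` is a power of two. -/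
lemma gcd_sq_sub_one_dvd {p N : ℕ} (hp : p.Prime) (hN : ¬ 4 ∣ N) :
    Nat.gcd N ((2 ^ p - 1) ^ 2 - 1) ∣ 2 ^ p - 1 - 1 := by
  obtain ⟨k, rfl⟩ : ∃ k, p = k + 2 := ⟨p - 2, by have := hp.two_le; omega⟩
  have hpos : 0 < 2 ^ k := by positivity
  have h1 : 2 ^ (k + 2) - 1 - 1 = 2 * (2 * 2 ^ k - 1) := by rw [pow_add]; omega
  have h2 : (2 ^ (k + 2) - 1) ^ 2 - 1 = 2 ^ (k + 3) * (2 * 2 ^ k - 1) := by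
    zify [show 1 ≤ (2 ^ (k + 2) - 1) ^ 2 from Nat.one_le_pow _ _ (by rw [pow_add]; omega),
      show 1 ≤ 2 ^ (k + 2) from Nat.one_le_two_pow, show 1 ≤ 2 * 2 ^ k by omega]
    ring
  rw [h1, h2]
  set g := Nat.gcd N (2 ^ (k + 3) * (2 * 2 ^ k - 1)) with hg
  have hg4 : ¬ 4 ∣ g := fun h => hN (h.trans (Nat.gcd_dvd_left _ _))
  have hgd : g ∣ 2 ^ (k + 3) * (2 * 2 ^ k - 1) := Nat.gcd_dvd_right _ _
  rcases Nat.even_or_odd g with ⟨b, hb⟩ | hodd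
  · have hbo : ¬ 2 ∣ b := fun h => hg4 (by omega)
    have hco : Nat.Coprime b (2 ^ (k + 3)) :=
      (Nat.Coprime.pow_right _ ((Nat.prime_two.coprime_iff_not_dvd.2 hbo).symm))
    have : b ∣ 2 * 2 ^ k - 1 := hco.dvd_of_dvd_mul_left (Dvd.dvd.trans ⟨2, by omega⟩ hgd)
    rw [show g = 2 * b by omega]
    exact Nat.mul_dvd_mul_left 2 this
  · have hco : Nat.Coprime g (2 ^ (k + 3)) :=
      Nat.Coprime.pow_right _ (Nat.coprime_two_right.2 hodd)
    exact (hco.dvd_of_dvd_mul_left hgd).mul_left 2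

/-- A power `q ^ k` with `k ≥ 2` is never one less than a power of two: as `q ^ 2 ≡ 1` modulo
`2 ^ (p + 1)`, `q ^ k + 1` is congruent to `2` or to `2 ^ p`, hence not divisible by
`2 ^ (p + 1)`. -/
lemma pow_add_one_ne_two_pow {p k a : ℕ} (hp : p.Prime) (hk : 2 ≤ k) :
    (2 ^ p - 1) ^ k + 1 ≠ 2 ^ a := by
  intro h
  have hp2 := hp.two_le
  have h4 : 2 ^ 2 ≤ 2 ^ p := Nat.pow_le_pow_right (by norm_num) hp2
  set q := 2 ^ p - 1 with hq
  have hq1 : q + 1 = 2 ^ p := by omega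
  have hlt : 2 ^ p < 2 ^ a := by
    rw [← h, ← hq1]
    have : q ^ 1 < q ^ k := Nat.pow_lt_pow_right (by omega) (by omega)
    rw [pow_one] at this
    omega
  have hpa : p < a := (Nat.pow_lt_pow_iff_right (by norm_num)).1 hlt
  have hdvd : (2 : ℤ) ^ (p + 1) ∣ (q : ℤ) ^ k + 1 := by
    have : (2 : ℤ) ^ (p + 1) ∣ 2 ^ a := pow_dvd_pow _ hpa
    rwa [show (2 : ℤ) ^ a = (q : ℤ) ^ k + 1 by exact_mod_cast h.symm] at this
  have hqz : (q : ℤ) = 2 ^ p - 1 := by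
    rw [eq_sub_iff_add_eq]; exact_mod_cast hq1
  have hsq : (q : ℤ) ^ 2 ≡ 1 [ZMOD 2 ^ (p + 1)] := by
    obtain ⟨j, rfl⟩ : ∃ j, p = j + 1 := ⟨p - 1, by omega⟩
    rw [Int.modEq_iff_dvd, hqz]
    exact ⟨1 - 2 ^ j, by ring⟩
  have hbig : (4 : ℤ) ≤ 2 ^ p := by exact_mod_cast h4
  have hp1 : (2 : ℤ) ^ (p + 1) = 2 * 2 ^ p := by ring
  rcases Nat.even_or_odd' k with ⟨m, rfl | rfl⟩
  · have h1 : (q : ℤ) ^ (2 * m) + 1 ≡ 2 [ZMOD 2 ^ (p + 1)] := by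
      have := (hsq.pow m).add_right 1
      rwa [← pow_mul, one_pow] at this
    have := Int.le_of_dvd (by norm_num) (h1.dvd_iff.1 hdvd)
    omega
  · have h1 : (q : ℤ) ^ (2 * m + 1) + 1 ≡ 2 ^ p [ZMOD 2 ^ (p + 1)] := by
      have := ((hsq.pow m).mul_right q).add_right 1
      rw [← pow_mul, ← pow_succ, one_pow, one_mul] at this
      rwa [hqz, sub_add_cancel, ← hqz] at this
    have := Int.le_of_dvd (by positivity) (h1.dvd_iff.1 hdvd)
    omega

/-- The geometric sum is `(q ^ n - 1) / (q ^ (n / l) - 1)`. If all its prime factors divided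
`q - 1`, it would be a power of `l`, since it is `≡ l` modulo each of them. For odd `l`, lifting the
exponent leaves only the value `l`, which is too small; for `l = 2` the sum is `q ^ (n / 2) + 1`, and
`n ≠ 2` rules out a power of two. -/
lemma exists_prime_dvd_geom_sum {p n l : ℕ} (hp : p.Prime) (hl : l.Prime) (hln : l ∣ n)
    (hn0 : n ≠ 0) (hn2 : n ≠ 2) :
    ∃ r : ℕ, r.Prime ∧ ¬ r ∣ 2 ^ p - 1 - 1 ∧
      r ∣ ∑ i ∈ Finset.range l, ((2 ^ p - 1) ^ (n / l)) ^ i := by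
  by_contra! hcon
  obtain ⟨k, rfl⟩ := hln
  have hk0 : k ≠ 0 := by rintro rfl; simp at hn0
  rw [Nat.mul_div_cancel_left _ hl.pos] at hcon
  have h4 : 2 ^ 2 ≤ 2 ^ p := Nat.pow_le_pow_right (by norm_num) hp.two_le
  set q := 2 ^ p - 1 with hq
  set y := q ^ k with hy
  set Q := ∑ i ∈ Finset.range l, y ^ i with hQ
  have hq1 : 2 < q := by omega
  have hyq : q - 1 ∣ y - 1 := by simpa using Nat.sub_dvd_pow_sub_pow q 1 k
  have hy1 : 1 < y := Nat.one_lt_pow hk0 (by omega)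
  have hlQ : l < Q := by
    have : ∑ i ∈ Finset.range l, 1 < Q :=
      Finset.sum_lt_sum (fun i _ => Nat.one_le_pow _ _ (by omega))
        ⟨1, Finset.mem_range.2 hl.one_lt, by simpa using hy1⟩
    simpa using this
  have hprime : ∀ r : ℕ, r.Prime → r ∣ Q → r = l ∧ r ∣ y - 1 := by
    intro r hr hrQ
    have hry : r ∣ y - 1 := by
      by_contra h
      exact hcon r hr (fun h' => h (h'.trans hyq)) hrQ
    have hmod : y ≡ 1 [MOD r] := ((Nat.modEq_iff_dvd' hy1.le).2 hry).symm
    have hQl : Q ≡ l [MOD r] := by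
      have : Q ≡ ∑ i ∈ Finset.range l, 1 [MOD r] :=
        Nat.ModEq.sum fun i _ => by simpa using hmod.pow i
      simpa using this
    exact ⟨(Nat.prime_dvd_prime_iff_eq hr hl).1 ((hQl.dvd_iff dvd_rfl).1 hrQ), hry⟩
  have hQpow := Nat.eq_prime_pow_of_unique_prime_dvd (n := Q) (by omega)
    (fun {d} hd hdQ => (hprime d hd hdQ).1)
  set a := Q.primeFactorsList.length
  have hlQd : l ∣ Q := by
    obtain ⟨r, hr, hrQ⟩ := Nat.exists_prime_and_dvd (n := Q) (by have := hl.two_le; omega)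
    rwa [(hprime r hr hrQ).1] at hrQ
  have hly := (hprime l hl hlQd).2
  rcases hl.eq_two_or_odd' with rfl | hodd
  · refine pow_add_one_ne_two_pow (p := p) (k := k) (a := a) hp (by omega) ?_
    rw [← hQpow, hQ, ← hq, ← hy]
    simp [Finset.sum_range_succ, add_comm]
  · have := Fact.mk hl
    have hly' : ¬ l ∣ y := fun h => hl.one_lt.ne' (Nat.dvd_one.1
      (by have := (Nat.dvd_sub h hly); rwa [Nat.sub_sub_self hy1.le] at this))
    have hval := padicValNat.pow_sub_pow (p := l) (x := y) (y := 1) hodd hy1 hly hly' hl.ne_zero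
    have hfac : y ^ l - 1 ^ l = Q * (y - 1) := by
      rw [one_pow, hQ, Nat.geomSum_eq hy1, Nat.div_mul_cancel]
      simpa using Nat.sub_dvd_pow_sub_pow y 1 l
    rw [hfac, padicValNat.mul (by omega) (by omega), padicValNat.self hl.one_lt, hQpow,
      padicValNat.prime_pow] at hval
    have : a = 1 := by omega
    rw [this, pow_one] at hQpow
    omega

/-- With `N = |C|` and `I` the index of `C` in `Eˣ`: for `n ∣ e` other than `2`, the number
`gcd (N, q ^ n - 1)` does not divide `q ^ (n / l) - 1` for any prime `l ∣ n`. -/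
lemma not_gcd_dvd_pow_sub_one {p e n l N I : ℕ} (hp : p.Prime) (hne : n ∣ e) (he : e ≠ 0)
    (hn2 : n ≠ 2) (hl : l.Prime) (hln : l ∣ n) (hNI : N * I = (2 ^ p - 1) ^ e - 1)
    (hI : ∀ r : ℕ, r.Prime → r ∣ I → r ∣ 2 ^ p - 1 - 1) :
    ¬ Nat.gcd N ((2 ^ p - 1) ^ n - 1) ∣ (2 ^ p - 1) ^ (n / l) - 1 := by
  intro hdvd
  have hn0 : n ≠ 0 := by rintro rfl; exact he (zero_dvd_iff.1 hne)
  obtain ⟨r, hr, hrq, hrQ⟩ := exists_prime_dvd_geom_sum hp hl hln hn0 hn2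
  have h4 : 2 ^ 2 ≤ 2 ^ p := Nat.pow_le_pow_right (by norm_num) hp.two_le
  set q := 2 ^ p - 1 with hq
  have hnl : n / l ≠ 0 := (Nat.div_pos (Nat.le_of_dvd (by omega) hln) hl.pos).ne'
  have hy1 : 1 < q ^ (n / l) := Nat.one_lt_pow hnl (by omega)
  have hfac : q ^ n - 1 = (∑ i ∈ Finset.range l, (q ^ (n / l)) ^ i) * (q ^ (n / l) - 1) := by
    rw [Nat.geomSum_eq hy1, Nat.div_mul_cancel, ← pow_mul, Nat.div_mul_cancel hln]
    simpa using Nat.sub_dvd_pow_sub_pow (q ^ (n / l)) 1 l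
  have hqn : 1 < q ^ n := Nat.one_lt_pow hn0 (by omega)
  have := Fact.mk hr
  set v := padicValNat r (q ^ n - 1) with hv
  have hrv : r ^ v ∣ q ^ n - 1 := pow_padicValNat_dvd
  have hcop : Nat.Coprime (r ^ v) I :=
    Nat.Coprime.pow_left _ ((Nat.Prime.coprime_iff_not_dvd hr).2 fun h => hrq (hI r hr h))
  have hrN : r ^ v ∣ N := by
    refine hcop.dvd_of_dvd_mul_right (hrv.trans ?_)
    rw [hNI]
    exact Nat.pow_sub_one_dvd_pow_sub_one q hne
  have h1 : r ^ v ∣ q ^ (n / l) - 1 := (Nat.dvd_gcd hrN hrv).trans hdvd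
  have h2 : r ^ (v + 1) ∣ q ^ n - 1 := by
    rw [hfac, pow_succ, mul_comm (r ^ v)]
    exact Nat.mul_dvd_mul hrQ h1
  have := (padicValNat_dvd_iff_le (by omega)).1 h2
  omega

/-! ### Weights of representations of `C ⋊ Γ` -/

/-- Commuting endomorphisms preserving a nonzero subspace `U` have a common eigenvector in `U`:
if one of them is not a scalar on `U`, replace `U` by one of its eigenspaces. -/
lemma exists_common_eigenvector {V : Type*} [AddCommGroup V] [Module ℂ V] [FiniteDimensional ℂ V]
    (S : Set (Module.End ℂ V)) (hS : ∀ f ∈ S, ∀ g ∈ S, Commute f g)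
    (U : Submodule ℂ V) (hU : U ≠ ⊥) (hinv : ∀ f ∈ S, ∀ u ∈ U, f u ∈ U) :
    ∃ v ∈ U, v ≠ 0 ∧ ∀ f ∈ S, ∃ μ : ℂ, f v = μ • v := by
  induction hd : Module.finrank ℂ U using Nat.strong_induction_on generalizing U with
  | _ d ih =>
    by_cases h : ∀ f ∈ S, ∃ μ : ℂ, ∀ u ∈ U, f u = μ • u
    · obtain ⟨v, hv, hv0⟩ := U.exists_mem_ne_zero_of_ne_bot hU
      exact ⟨v, hv, hv0, fun f hf => (h f hf).imp fun μ hμ => hμ v hv⟩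
    · push Not at h
      obtain ⟨f, hf, hns⟩ := h
      have : Nontrivial U := (Submodule.nontrivial_iff_ne_bot).2 hU
      obtain ⟨μ, hμ⟩ := Module.End.exists_eigenvalue (f.restrict (hinv f hf))
      obtain ⟨w, hw⟩ := hμ.exists_hasEigenvector
      have hw' : f w = μ • (w : V) := congrArg Subtype.val hw.apply_eq_smul
      obtain ⟨u, hu, hune⟩ := hns μ
      let U' : Submodule ℂ V := U ⊓ Module.End.eigenspace f μ
      have hlt : U' < U := by
        refine lt_of_le_of_ne inf_le_left fun h => hune ?_
        have : u ∈ U' := by rw [h]; exact hu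
        exact Module.End.mem_eigenspace_iff.1 this.2
      have hne : U' ≠ ⊥ := by
        refine (Submodule.ne_bot_iff _).2 ⟨w, ⟨w.2, Module.End.mem_eigenspace_iff.2 hw'⟩, ?_⟩
        simpa using hw.2
      obtain ⟨v, hv, h⟩ := ih _ (hd ▸ Submodule.finrank_lt_finrank_of_lt hlt) U' hne
        (fun g hg x hx => ⟨hinv g hg x hx.1, Module.End.mem_eigenspace_iff.2 (by
          have hc : f (g x) = g (f x) := LinearMap.congr_fun (hS f hf g hg).eq x
          rw [hc, Module.End.mem_eigenspace_iff.1 hx.2, map_smul])⟩) rfl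
      exact ⟨v, hv.1, h⟩

section

variable {C Γ : Type} [CommGroup C] [Group Γ] (φ : Γ →* MulAut C)

/-- The action of `Γ` on the characters of `C`: `(γ • χ) c = χ (γ⁻¹ c)`. It is kept out of the
instance database, as it depends on `φ`. -/
abbrev charAction : MulAction Γ (C →* ℂˣ) where
  smul γ χ := χ.comp (φ γ⁻¹).toMonoidHom
  one_smul χ := by ext c; change ((χ (φ 1⁻¹ c) : ℂˣ) : ℂ) = _; simp
  mul_smul a b χ := by
    ext c
    change ((χ (φ (a * b)⁻¹ c) : ℂˣ) : ℂ) = χ (φ b⁻¹ (φ a⁻¹ c))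
    simp

lemma charAction_apply (γ : Γ) (χ : C →* ℂˣ) (c : C) :
    letI := charAction φ
    (γ • χ) c = χ (φ γ⁻¹ c) := rfl

variable {φ}

lemma exists_weight_vector {V : Type*} [AddCommGroup V] [Module ℂ V] [FiniteDimensional ℂ V]
    [Nontrivial V] (ρ : Representation ℂ C V) :
    ∃ (χ : C →* ℂˣ) (v : V), v ≠ 0 ∧ ∀ c, ρ c v = (χ c : ℂ) • v := by
  obtain ⟨v, -, hv0, hv⟩ := exists_common_eigenvector (Set.range ρ)
    (by
      rintro _ ⟨a, rfl⟩ _ ⟨b, rfl⟩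
      rw [commute_iff_eq, ← map_mul, mul_comm, map_mul]) ⊤ top_ne_bot (by simp)
  choose μ hμ using fun c => hv (ρ c) ⟨c, rfl⟩
  let χ : C →* ℂ :=
    { toFun := μ
      map_one' := smul_left_injective ℂ hv0 (by simp [← hμ])
      map_mul' := fun a b => smul_left_injective ℂ hv0 (by
        change μ (a * b) • v = (μ a * μ b) • v
        rw [← hμ, map_mul, Module.End.mul_apply, hμ b, map_smul, hμ a, smul_smul, mul_comm]) }
  exact ⟨χ.toHomUnits, v, hv0, hμ⟩

/-- `γ` maps vectors of weight `χ` to vectors of weight `γ • χ`. -/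
lemma rho_inl_rho_inr {V : Type*} [AddCommGroup V] [Module ℂ V]
    (ρ : Representation ℂ (C ⋊[φ] Γ) V) {χ : C →* ℂˣ} {w : V}
    (hw : ∀ c, ρ (.inl c) w = (χ c : ℂ) • w) (γ : Γ) (c : C) :
    letI := charAction φ
    ρ (.inl c) (ρ (.inr γ) w) = (((γ • χ) c : ℂˣ) : ℂ) • ρ (.inr γ) w := by
  have h : (SemidirectProduct.inl c * SemidirectProduct.inr γ : C ⋊[φ] Γ)
      = SemidirectProduct.inr γ * SemidirectProduct.inl (φ γ⁻¹ c) := by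
    ext <;> simp
  rw [← Module.End.mul_apply, ← map_mul, h, map_mul, Module.End.mul_apply, hw, map_smul,
    charAction_apply]

/-- Weight vectors with distinct weights are independent. This reduces to the independence of
characters by applying a linear functional to the translates of a linear relation. -/
lemma linearIndependent_of_weights {V ι : Type*} [AddCommGroup V] [Module ℂ V]
    (ρ : Representation ℂ C V) (χ : ι → C →* ℂˣ) (hχ : Function.Injective χ) (b : ι → V)
    (hb0 : ∀ i, b i ≠ 0) (hb : ∀ i c, ρ c (b i) = (χ i c : ℂ) • b i) : LinearIndependent ℂ b := by
  rw [linearIndependent_iff']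
  intro s a hsum i hi
  have hinj : Function.Injective fun i => (Units.coeHom ℂ).comp (χ i) := fun i j hij =>
    hχ (by ext c; exact DFunLike.congr_fun hij c)
  have hli := (linearIndependent_monoidHom C ℂ).comp _ hinj
  rw [linearIndependent_iff'] at hli
  have hf : ∀ f : Module.Dual ℂ V, a i * f (b i) = 0 := by
    intro f
    refine hli s (fun i => a i * f (b i)) ?_ i hi
    ext c
    have := congrArg (fun v => f (ρ c v)) hsum
    simp only [map_sum, map_smul, hb, map_zero, smul_eq_mul] at this
    simpa [mul_comm, mul_left_comm, mul_assoc] using this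
  have : a i • b i = 0 := (Module.forall_dual_apply_eq_zero_iff ℂ _).1 fun f => by simpa using hf f
  exact (smul_eq_zero.1 this).resolve_right (hb0 i)

/-- The dimension of an irreducible representation of `C ⋊ Γ`, with `Γ` commutative, is the size of
the `Γ`-orbit of a weight of `C`. -/
lemma exists_finrank_eq_card_orbit {V : Type*} [AddCommGroup V] [Module ℂ V]
    [FiniteDimensional ℂ V] [Nontrivial V] (hΓ : ∀ a b : Γ, a * b = b * a)
    (ρ : Representation ℂ (C ⋊[φ] Γ) V)
    (hirr : ∀ U : Submodule ℂ V, U ≠ ⊥ → (∀ g, ∀ u ∈ U, ρ g u ∈ U) → U = ⊤) :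
    letI := charAction φ
    ∃ χ : C →* ℂˣ, Module.finrank ℂ V = Nat.card (MulAction.orbit Γ χ) := by
  let := charAction φ
  obtain ⟨χ, v, hv0, hv⟩ := exists_weight_vector (ρ.comp SemidirectProduct.inl)
  let Wχ : Submodule ℂ V := ⨅ c, Module.End.eigenspace (ρ (.inl c)) (χ c : ℂ)
  have hW : ∀ w, w ∈ Wχ ↔ ∀ c, ρ (.inl c) w = (χ c : ℂ) • w := by
    simp [Wχ, Submodule.mem_iInf]
  obtain ⟨w, hwW, hw0, hwS⟩ := exists_common_eigenvector
    ((fun s => ρ (.inr s)) '' (MulAction.stabilizer Γ χ : Set Γ))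
    (by
      rintro _ ⟨a, -, rfl⟩ _ ⟨b, -, rfl⟩
      simp only [commute_iff_eq, ← map_mul, hΓ a b])
    Wχ (by
      rw [Submodule.ne_bot_iff]
      exact ⟨v, (hW v).2 hv, hv0⟩)
    (by
      rintro _ ⟨s, hs, rfl⟩ u hu
      rw [hW] at hu ⊢
      intro c
      have := rho_inl_rho_inr ρ hu s c
      rwa [MulAction.mem_stabilizer_iff.1 hs] at this)
  rw [hW] at hwW
  choose γ hγ using fun x : MulAction.orbit Γ χ => x.2
  let b : MulAction.orbit Γ χ → V := fun x => ρ (.inr (γ x)) w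
  have hb : ∀ x c, ρ (.inl c) (b x) = ((x : C →* ℂˣ) c : ℂ) • b x := by
    intro x c
    have := rho_inl_rho_inr ρ hwW (γ x) c
    rwa [show γ x • χ = x from hγ x] at this
  have hinj : ∀ g, Function.Injective (ρ g) := fun g x y h => by
    have := congrArg (ρ g⁻¹) h
    simpa using this
  have hb0 : ∀ x, b x ≠ 0 := fun x h => hw0 (hinj _ (h.trans (map_zero _).symm))
  have hli : LinearIndependent ℂ b := linearIndependent_of_weights
    (ρ.comp SemidirectProduct.inl) (fun x : MulAction.orbit Γ χ => (x : C →* ℂˣ))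
    Subtype.val_injective b hb0 hb
  -- Each translate of `w` lies on the line of the chosen vector with the same weight.
  have hline : ∀ δ : Γ, ρ (.inr δ) w ∈ Submodule.span ℂ (Set.range b) := by
    intro δ
    let x : MulAction.orbit Γ χ := ⟨δ • χ, δ, rfl⟩
    have hstab : (γ x)⁻¹ * δ ∈ MulAction.stabilizer Γ χ := by
      rw [MulAction.mem_stabilizer_iff, mul_smul, inv_smul_eq_iff]
      exact (hγ x).symm
    obtain ⟨μ, hμ⟩ := hwS _ ⟨_, hstab, rfl⟩
    have : ρ (.inr δ) w = μ • b x := by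
      rw [← map_smul, ← hμ, ← Module.End.mul_apply, ← map_mul, ← map_mul, mul_inv_cancel_left]
    rw [this]
    exact Submodule.smul_mem _ _ (Submodule.subset_span ⟨x, rfl⟩)
  have hspan : Submodule.span ℂ (Set.range b) = ⊤ := by
    refine hirr _ ?_ ?_
    · let x : MulAction.orbit Γ χ := ⟨χ, MulAction.mem_orbit_self χ⟩
      rw [Submodule.ne_bot_iff]
      exact ⟨b x, Submodule.subset_span ⟨x, rfl⟩, hb0 x⟩
    · intro g u hu
      induction hu using Submodule.span_induction with
      | zero => simp
      | add x y _ _ hx hy => rw [map_add]; exact Submodule.add_mem _ hx hy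
      | smul a x _ hx => rw [map_smul]; exact Submodule.smul_mem _ _ hx
      | mem u hu =>
        obtain ⟨x, rfl⟩ := hu
        rw [← SemidirectProduct.inl_left_mul_inr_right g, map_mul, Module.End.mul_apply]
        have h1 : ρ (.inr g.right) (b x) = ρ (.inr (g.right * γ x)) w := by
          rw [map_mul, map_mul, Module.End.mul_apply]
        rw [h1, rho_inl_rho_inr ρ hwW]
        exact Submodule.smul_mem _ _ (hline _)
  exact ⟨χ, Module.finrank_eq_nat_card_basis (Module.Basis.mk hli hspan.ge)⟩

/-- The monomial representation of `C ⋊ Γ` on the functions on the `Γ`-orbit of `χ`: an element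
`c` of `C` multiplies the value at `x` by `x c`, and `Γ` permutes the points of the orbit. -/
def orbitRep (χ : C →* ℂˣ) :
    letI := charAction φ
    Representation ℂ (C ⋊[φ] Γ) (MulAction.orbit Γ χ → ℂ) :=
  letI := charAction φ
  { toFun := fun g =>
      { toFun := fun f x => ((x : C →* ℂˣ) g.left : ℂ) * f (g.right⁻¹ • x)
        map_add' := fun f f' => by ext x; simp [mul_add]
        map_smul' := fun a f => by ext x; simp [mul_left_comm] }
    map_one' := by ext f x; simp
    map_mul' := fun g h => by
      ext f x
      simp [mul_smul, mul_assoc, MulAction.orbit.coe_smul, charAction_apply] }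

lemma orbitRep_apply (χ : C →* ℂˣ) (g : C ⋊[φ] Γ) :
    letI := charAction φ
    ∀ (f : MulAction.orbit Γ χ → ℂ) (x : MulAction.orbit Γ χ),
    orbitRep χ g f x = ((x : C →* ℂˣ) g.left : ℂ) * f (g.right⁻¹ • x) := fun _ _ => rfl

/-- Every equivariant endomorphism of `orbitRep χ` is a scalar. -/
lemma orbitRep_endo (χ : C →* ℂˣ) :
    letI := charAction φ
    ∀ (T : (MulAction.orbit Γ χ → ℂ) →ₗ[ℂ] (MulAction.orbit Γ χ → ℂ)),
    Finite (MulAction.orbit Γ χ) →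
    (∀ g f, T (orbitRep χ g f) = orbitRep χ g (T f)) → ∃ a : ℂ, ∀ f, T f = a • f := by
  classical
  let := charAction φ
  intro T _ hT
  let x₀ : MulAction.orbit Γ χ := ⟨χ, MulAction.mem_orbit_self χ⟩
  -- `T` commutes with `C`, so it preserves the weight line spanned by each `Pi.single x 1`.
  have hδ : ∀ x y : MulAction.orbit Γ χ, y ≠ x → T (Pi.single x 1) y = 0 := by
    intro x y hxy
    by_contra h0
    apply hxy
    ext c
    have h1 : orbitRep χ (.inl c) (Pi.single x 1) = ((x : C →* ℂˣ) c : ℂ) • Pi.single x 1 := by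
      ext z
      rw [orbitRep_apply]
      by_cases hz : z = x
      · subst hz; simp
      · simp [hz]
    have h2 := congrFun (hT (.inl c) (Pi.single x 1)) y
    rw [h1, map_smul, orbitRep_apply] at h2
    simp only [Pi.smul_apply, smul_eq_mul, SemidirectProduct.left_inl,
      SemidirectProduct.right_inl, inv_one, one_smul] at h2
    exact (mul_right_cancel₀ h0 h2).symm
  -- `T` commutes with `Γ`, which is transitive on the orbit, so its diagonal is constant.
  have hdiag : ∀ x : MulAction.orbit Γ χ,
      T (Pi.single x 1) x = T (Pi.single x₀ 1) x₀ := by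
    intro x
    obtain ⟨γ, hγ⟩ := x.2
    have hx : γ • x₀ = x := Subtype.ext hγ
    have h1 : orbitRep χ (.inr γ) (Pi.single x₀ 1) = Pi.single x 1 := by
      ext z
      rw [orbitRep_apply]
      simp [Pi.single_apply, inv_smul_eq_iff, hx]
    have h2 := congrFun (hT (.inr γ) (Pi.single x₀ 1)) x
    rw [h1, orbitRep_apply] at h2
    simpa [← hx] using h2
  refine ⟨T (Pi.single x₀ 1) x₀, fun f => ?_⟩
  have := Fintype.ofFinite (MulAction.orbit Γ χ)
  suffices h : T = T (Pi.single x₀ 1) x₀ • LinearMap.id by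
    conv_lhs => rw [h]
    rfl
  refine LinearMap.pi_ext' fun x => LinearMap.ext_ring ?_
  ext y
  by_cases hy : y = x
  · subst hy; simpa using hdiag y
  · simpa [Pi.single_apply, hy] using hδ x y hy

end

/-! ### Simple objects of `FDRep` -/

/-- A simple object of `FDRep` has no nonzero proper invariant subspace. -/
lemma FDRep.eq_top_of_simple {G : Type} [Group G] (W : FDRep ℂ G) [Simple W] (U : Submodule ℂ W)
    (hU : U ≠ ⊥) (hinv : ∀ g, ∀ u ∈ U, W.ρ g u ∈ U) : U = ⊤ := by
  let ρU : Representation ℂ G U :=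
    { toFun := fun g => (W.ρ g).restrict (hinv g)
      map_one' := by ext; simp
      map_mul' := fun a b => by ext; simp }
  let i : FDRep.of ρU ⟶ W :=
    ⟨FGModuleCat.ofHom U.subtype, fun g => by ext u; rfl⟩
  have hmono : Mono i := by
    exact ConcreteCategory.mono_of_injective i U.injective_subtype
  have hne : i ≠ 0 := by
    obtain ⟨u, hu, hu0⟩ := U.exists_mem_ne_zero_of_ne_bot hU
    intro h
    have h' : i.hom.hom.hom ⟨u, hu⟩ = 0 := by rw [h]; rfl
    exact hu0 h'
  have := isIso_of_mono_of_nonzero hne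
  rw [eq_top_iff]
  intro w _
  have h : i.hom.hom.hom ((inv i).hom.hom.hom w) = w :=
    congrArg (fun f : W ⟶ W => f.hom.hom.hom w) (IsIso.inv_hom_id i)
  rw [← h]
  exact ((inv i).hom.hom.hom w : U).2

lemma FDRep.nontrivial_of_simple {G : Type} [Group G] (W : FDRep ℂ G) [Simple W] :
    Nontrivial W := by
  by_contra h
  rw [not_nontrivial_iff_subsingleton] at h
  exact id_nonzero W (by ext x; exact Subsingleton.elim _ _)

/-- By Maschke's theorem, a representation all of whose endomorphisms are scalars is simple. -/
lemma FDRep.simple_of_endo {G V : Type} [Group G] [Finite G] [AddCommGroup V] [Module ℂ V]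
    [FiniteDimensional ℂ V] [Nontrivial V] (ρ : Representation ℂ G V)
    (h : ∀ T : V →ₗ[ℂ] V, (∀ g v, T (ρ g v) = ρ g (T v)) → ∃ a : ℂ, ∀ v, T v = a • v) :
    Simple (FDRep.of ρ) := by
  have : NeZero (Nat.card G : ℂ) := ⟨by simp [Nat.card_pos.ne']⟩
  rw [FDRep.simple_iff_end_is_rank_one]
  have hid : 𝟙 (FDRep.of ρ) ≠ 0 := by
    intro h0
    obtain ⟨v, hv⟩ := exists_ne (0 : V)
    have h' : (𝟙 (FDRep.of ρ) : FDRep.of ρ ⟶ FDRep.of ρ).hom.hom.hom v = 0 := by rw [h0]; rfl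
    exact hv h'
  rw [finrank_eq_one_iff_of_nonzero' _ hid]
  intro T
  obtain ⟨a, ha⟩ := h T.hom.hom.hom (fun g v =>
    congrArg (fun f => f.hom.hom v) (T.comm g))
  exact ⟨a, by ext v; exact (ha v).symm⟩

/-! ### Orbits of the Frobenius on characters -/

/-- If `Γ` is generated by `σ`, acting on `C` by `c ↦ c ^ q`, then the orbit of `χ` has size dividing
`k` iff `σ ^ k` fixes `χ`, i.e. iff `χ ^ (q ^ k) = χ`. -/
lemma card_orbit_dvd {C Γ : Type} [CommGroup C] [Group Γ] [Finite C] [Finite Γ]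
    (φ : Γ →* MulAut C) {q : ℕ} (σ : Γ) (hσ : ∀ γ : Γ, γ ∈ Subgroup.zpowers σ)
    (hφ : ∀ c, φ σ c = c ^ q) (χ : C →* ℂˣ) (k : ℕ) :
    letI := charAction φ
    Nat.card (MulAction.orbit Γ χ) ∣ k ↔ ∀ c, χ c ^ q ^ k = χ c := by
  let := charAction φ
  have horb : MulAction.orbit Γ χ = MulAction.orbit (Subgroup.zpowers σ) χ := by
    ext x
    constructor
    · rintro ⟨γ, rfl⟩
      exact ⟨⟨γ, hσ γ⟩, rfl⟩
    · rintro ⟨γ, rfl⟩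
      exact ⟨γ, rfl⟩
  have hfin : Finite (MulAction.orbit (Subgroup.zpowers σ) χ) :=
    inferInstanceAs (Finite (Set.range _))
  have := Fintype.ofFinite (MulAction.orbit (Subgroup.zpowers σ) χ)
  have hpow : ∀ (k : ℕ) c, φ (σ ^ k) c = c ^ q ^ k := by
    intro k
    induction k with
    | zero => simp
    | succ k ih => intro c; rw [pow_succ, map_mul, MulAut.mul_apply, hφ, ih, ← pow_mul, pow_succ']
  rw [horb, Nat.card_eq_fintype_card, ← MulAction.minimalPeriod_eq_card,
    ← MulAction.pow_smul_eq_iff_minimalPeriod_dvd, eq_comm, ← inv_smul_eq_iff, DFunLike.ext_iff]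
  refine forall_congr' fun c => ?_
  rw [charAction_apply, inv_inv, hpow, map_pow]

/-- A finite cyclic group has a character of each order `t` dividing its cardinality. -/
lemma exists_char_pow_eq_iff {C : Type} [CommGroup C] [Finite C] [IsCyclic C] {t : ℕ}
    (ht : t ∣ Nat.card C) :
    ∃ χ : C →* ℂˣ, ∀ m : ℕ, (∀ c, χ c ^ m = 1) ↔ t ∣ m := by
  obtain ⟨g, hg⟩ := IsCyclic.exists_generator (α := C)
  have ht0 : t ≠ 0 := by rintro rfl; exact Nat.card_pos.ne' (zero_dvd_iff.1 ht)
  have hζ := (Complex.isPrimitiveRoot_exp t ht0).isUnit_unit ht0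
  set ζ := ((Complex.isPrimitiveRoot_exp t ht0).isUnit ht0).unit
  have hord : orderOf ζ ∣ orderOf g := by
    rw [← hζ.eq_orderOf, orderOf_eq_card_of_forall_mem_zpowers hg]
    exact ht
  refine ⟨monoidHomOfForallMemZpowers hg hord, fun m => ?_⟩
  rw [← hζ.pow_eq_one_iff_dvd]
  constructor
  · intro h
    have := h g
    rwa [monoidHomOfForallMemZpowers_apply_gen] at this
  · intro h c
    obtain ⟨j, rfl⟩ := hg c
    simp only
    rw [map_zpow, monoidHomOfForallMemZpowers_apply_gen, ← zpow_natCast, zpow_comm, zpow_natCast, h,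
      one_zpow]

/-- **Main Theorem.** Let `q` be a Mersenne prime, `e > 1` an even integer, `F = 𝔽_q = ZMod q`,
`E = 𝔽_{q^e}`, `Γ = Gal(E/F)`, and `C ≤ Eˣ` a subgroup such that every prime dividing the index
`[Eˣ : C]` divides `q - 1` and `4 ∤ |C|`.  Then the set of degrees of irreducible complex
representations of `G = C ⋊ Γ` is the set of divisors of `e` with `2` removed. -/
theorem cd_semidirectProduct_eq_divisors_erase_two
    (q p e : ℕ) (hp : Nat.Prime p) (hq : q = 2 ^ p - 1) [Fact (Nat.Prime q)]
    (he : 1 < e) (heven : Even e)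
    (E : Type) [Field E] [Fintype E] [Algebra (ZMod q) E]
    (hcard : Fintype.card E = q ^ e)
    (C : Subgroup Eˣ)
    (hCindex : ∀ r : ℕ, r.Prime → r ∣ C.index → r ∣ q - 1)
    (hC4 : ¬ (4 ∣ Nat.card C))
    (φ : (E ≃ₐ[ZMod q] E) →* MulAut C)
    (hφ : ∀ (τ : E ≃ₐ[ZMod q] E) (x : C), ((φ τ x : Eˣ) : E) = τ ((x : Eˣ) : E)) :
    {n : ℕ | ∃ W : FDRep ℂ (SemidirectProduct C (E ≃ₐ[ZMod q] E) φ),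
        Simple W ∧ Module.finrank ℂ W = n}
      = {n : ℕ | n ∣ e} \ {2} := by
  have hq1 : 1 < q := (Fact.out : q.Prime).one_lt
  have hqpow : ∀ k, 1 ≤ q ^ k := fun k => Nat.one_le_pow _ _ (by omega)
  have hNI : Nat.card C * C.index = q ^ e - 1 := by
    classical
    rw [Subgroup.card_mul_index, Nat.card_eq_fintype_card, Fintype.card_units, hcard]
  have hfinrank : Module.finrank (ZMod q) E = e := by
    have := Module.card_eq_pow_finrank (K := ZMod q) (V := E)
    rw [hcard, ZMod.card] at this
    exact (Nat.pow_right_injective hq1 this).symm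
  let σ := FiniteField.frobeniusAlgEquivOfAlgebraic (ZMod q) E
  have hσord : orderOf σ = Nat.card (E ≃ₐ[ZMod q] E) := by
    rw [FiniteField.orderOf_frobeniusAlgEquivOfAlgebraic, IsGalois.card_aut_eq_finrank]
  have hσ : ∀ γ, γ ∈ Subgroup.zpowers σ := by
    intro γ
    rw [Subgroup.eq_top_of_card_eq (Subgroup.zpowers σ) (by rw [Nat.card_zpowers, hσord])]
    trivial
  have hΓ : ∀ a b : E ≃ₐ[ZMod q] E, a * b = b * a := by
    intro a b
    obtain ⟨i, rfl⟩ := hσ a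
    obtain ⟨j, rfl⟩ := hσ b
    exact zpow_mul_comm σ i j
  have hφσ : ∀ c, φ σ c = c ^ q := by
    intro c
    ext
    rw [hφ]
    simp [σ, ZMod.card]
  let := charAction φ
  have horbfin : ∀ χ : C →* ℂˣ, Finite (MulAction.orbit (E ≃ₐ[ZMod q] E) χ) := fun χ =>
    inferInstanceAs (Finite (Set.range _))
  have hGfin : Finite (SemidirectProduct C (E ≃ₐ[ZMod q] E) φ) :=
    Finite.of_equiv _ SemidirectProduct.equivProd.symm
  -- The orbit of `χ` has size dividing `k` iff the values of `χ` are `(q ^ k - 1)`-th roots of unity.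
  have hdvd : ∀ (χ : C →* ℂˣ) (k : ℕ), Nat.card (MulAction.orbit (E ≃ₐ[ZMod q] E) χ) ∣ k ↔
      ∀ c, χ c ^ (q ^ k - 1) = 1 := by
    intro χ k
    rw [card_orbit_dvd φ σ hσ hφσ]
    refine forall_congr' fun c => ?_
    conv_lhs => rw [← Nat.sub_add_cancel (hqpow k), pow_succ, mul_eq_right]
  have hcardpow : ∀ (χ : C →* ℂˣ) c, χ c ^ Nat.card C = 1 := by
    intro χ c
    rw [← map_pow, pow_card_eq_one', map_one]
  ext n
  simp only [Set.mem_ofPred_eq, Set.mem_sdiff, Set.mem_singleton_iff]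
  constructor
  · rintro ⟨W, hW, rfl⟩
    have := FDRep.nontrivial_of_simple W
    obtain ⟨χ, hχ⟩ := exists_finrank_eq_card_orbit hΓ W.ρ (FDRep.eq_top_of_simple W)
    rw [hχ]
    constructor
    · rw [hdvd]
      intro c
      rw [← hNI, pow_mul, hcardpow, one_pow]
    · intro h2
      have h1 : Nat.card (MulAction.orbit (E ≃ₐ[ZMod q] E) χ) ∣ 1 := by
        rw [hdvd]
        intro c
        have hsq := (hdvd χ 2).1 h2.dvd c
        rw [← orderOf_dvd_iff_pow_eq_one] at hsq ⊢
        have hg := Nat.dvd_gcd (orderOf_dvd_of_pow_eq_one (hcardpow χ c)) hsq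
        rw [pow_one]
        subst hq
        exact hg.trans (gcd_sq_sub_one_dvd hp hC4)
      rw [h2] at h1
      omega
  · rintro ⟨hne, hn2⟩
    obtain ⟨χ, hχ⟩ := exists_char_pow_eq_iff (C := C) (Nat.gcd_dvd_left (Nat.card C) (q ^ n - 1))
    have hn0 : n ≠ 0 := by rintro rfl; have := zero_dvd_iff.1 hne; omega
    have hcardn : Nat.card (MulAction.orbit (E ≃ₐ[ZMod q] E) χ) = n := by
      have hd : Nat.card (MulAction.orbit (E ≃ₐ[ZMod q] E) χ) ∣ n := by
        rw [hdvd, hχ]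
        exact Nat.gcd_dvd_right _ _
      -- A proper divisor of `n` divides `n / l` for some prime `l ∣ n`.
      by_contra hlt
      obtain ⟨m, hm⟩ := hd
      have hm1 : m ≠ 1 := by rintro rfl; omega
      obtain ⟨l, hl, k, rfl⟩ := Nat.exists_prime_and_dvd hm1
      have hnl : n = l * (Nat.card (MulAction.orbit (E ≃ₐ[ZMod q] E) χ) * k) := by
        rw [hm.trans (mul_left_comm _ _ _)]
      have hdl : Nat.card (MulAction.orbit (E ≃ₐ[ZMod q] E) χ) ∣ n / l := by
        refine ⟨k, Nat.div_eq_of_eq_mul_right hl.pos hnl⟩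
      rw [hdvd, hχ] at hdl
      subst hq
      exact not_gcd_dvd_pow_sub_one hp hne (by omega) hn2 hl ⟨_, hnl⟩ hNI hCindex hdl
    have hne : Nonempty (MulAction.orbit (E ≃ₐ[ZMod q] E) χ) := ⟨χ, MulAction.mem_orbit_self χ⟩
    have := Fintype.ofFinite (MulAction.orbit (E ≃ₐ[ZMod q] E) χ)
    refine ⟨FDRep.of (orbitRep χ), FDRep.simple_of_endo _
      (fun T hT => orbitRep_endo χ T (horbfin χ) hT), ?_⟩
    change Module.finrank ℂ (MulAction.orbit (E ≃ₐ[ZMod q] E) χ → ℂ) = n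
    rw [Module.finrank_fintype_fun_eq_card, ← Nat.card_eq_fintype_card, hcardn]
end

section
/- For every intermediate field L with F ≤ L ≤ E and L ≠ 𝔽_{q^2}, the field L equals the smallest subfield of E containing F together with L ∩ C; that is, L is generated over F by the elements of C lying in L. -/
/-!
Let `M` be the field generated over `𝔽_q` by `L ∩ C`, so `𝔽_q ≤ M ≤ L`, and write `|M| = q ^ m = Q`,
`|L| = Q ^ k`. For a generator `x` of the cyclic group `Lˣ`, the element `x ^ [Eˣ : C]` lies in
`L ∩ C ⊆ M`, so `x ^ ([Eˣ : C] * (Q - 1)) = 1`; hence `N = (Q ^ k - 1) / (Q - 1)` divides `[Eˣ : C]`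
and every prime factor of `N` divides `q - 1`, hence `Q - 1`.

Lifting the exponent then gives `2 * N ∣ k * (Q + 1)` (`two_mul_geom_sum_dvd`), which is impossible
for size reasons when `k ≥ 3` (`lt_two_mul_geom_sum`). When `k = 2`, `N = q ^ m + 1` has no odd
prime factor, which forces `m = 1` (`eq_one_of_pow_add_one`), i.e. `|L| = q ^ 2`. So `k = 1` and
`M = L`. This uses no primitive prime divisors, and of the Mersenne hypothesis only that `q` is odd.
-/

lemma geom_sum_mul_sub_one {Q : ℕ} (hQ : 2 ≤ Q) (k : ℕ) :
    (∑ i ∈ Finset.range k, Q ^ i) * (Q - 1) = Q ^ k - 1 := by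
  rw [Nat.geomSum_eq hQ, Nat.div_mul_cancel (by simpa using Nat.sub_dvd_pow_sub_pow Q 1 k)]

/-- If every prime factor of `1 + Q + ⋯ + Q ^ (k - 1)` divides `Q - 1`, then lifting the exponent
bounds each of its `r`-adic valuations: by that of `k` for odd `r`, and by one less than that of
`k * (Q + 1)` for `r = 2`. -/
lemma two_mul_geom_sum_dvd {Q k : ℕ} (hQ : 3 ≤ Q) (hodd : Odd Q) (hk : k ≠ 0)
    (hprime : ∀ r : ℕ, r.Prime → r ∣ ∑ i ∈ Finset.range k, Q ^ i → r ∣ Q - 1) :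
    2 * ∑ i ∈ Finset.range k, Q ^ i ∣ k * (Q + 1) := by
  set N := ∑ i ∈ Finset.range k, Q ^ i with hN
  have hmul : N * (Q - 1) = Q ^ k - 1 := geom_sum_mul_sub_one (by omega) k
  have hN0 : N ≠ 0 := by
    intro h
    have : 1 < Q ^ k := Nat.one_lt_pow hk (by omega)
    rw [h] at hmul
    omega
  have hQ1 : Q - 1 ≠ 0 := by omega
  rw [← Nat.factorization_prime_le_iff_dvd (by positivity) (by positivity)]
  intro r hr
  have : Fact r.Prime := ⟨hr⟩
  simp only [Nat.factorization_def _ hr]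
  rw [padicValNat.mul two_ne_zero hN0, padicValNat.mul hk (by omega)]
  have hval := congrArg (padicValNat r) hmul
  rw [padicValNat.mul hN0 hQ1] at hval
  rcases hr.eq_two_or_odd' with rfl | hr2
  · have h2 : 2 ∣ Q - 1 := by obtain ⟨j, rfl⟩ := hodd; simp
    rw [padicValNat.self one_lt_two]
    rcases Nat.even_or_odd k with hke | hko
    · have := padicValNat.pow_two_sub_pow (x := Q) (y := 1) (by omega) h2
        (by have := Nat.odd_iff.mp hodd; omega) hk hke
      rw [one_pow] at this
      omega
    · have hNodd : Odd N := by
        rw [hN, Finset.odd_sum_iff_odd_card_odd]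
        simpa [hodd.pow] using hko
      rw [padicValNat.eq_zero_of_not_dvd (by have := Nat.odd_iff.mp hNodd; omega : ¬ 2 ∣ N)]
      have : 1 ≤ padicValNat 2 (Q + 1) := one_le_padicValNat_of_dvd (by omega) (by omega)
      omega
  · have hr' : padicValNat r 2 = 0 := by
      apply padicValNat.eq_zero_of_not_dvd
      intro h
      rw [(Nat.prime_dvd_prime_iff_eq hr Nat.prime_two).mp h] at hr2
      exact absurd hr2 (by decide)
    by_cases hd : r ∣ N
    · have hrQ := hprime r hr hd
      have := padicValNat.pow_sub_pow (x := Q) (y := 1) hr2 (by omega) hrQ (by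
        intro h
        have h1 := (Nat.dvd_sub h hrQ)
        rw [Nat.sub_sub_self (by omega)] at h1
        exact hr.one_lt.ne' (Nat.dvd_one.mp h1)) hk
      rw [one_pow] at this
      omega
    · rw [padicValNat.eq_zero_of_not_dvd hd, hr']
      omega

lemma lt_two_mul_geom_sum {Q k : ℕ} (hQ : 3 ≤ Q) (hk : 3 ≤ k) :
    k * (Q + 1) < 2 * ∑ i ∈ Finset.range k, Q ^ i := by
  induction k, hk using Nat.le_induction with
  | base => simp [Finset.sum_range_succ]; nlinarith
  | succ k hk ih =>
    rw [Finset.sum_range_succ]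
    have : Q ≤ Q ^ k := Nat.le_self_pow (by omega) Q
    nlinarith

/-- For even `m`, `q ^ m + 1` is twice an odd number; for odd `m`, the cofactor of `q + 1` in
`q ^ m + 1` is odd. Either way an odd prime factor appears unless `m = 1`. -/
lemma eq_one_of_pow_add_one {q m : ℕ} (hq : 3 ≤ q) (hodd : Odd q) (hm : m ≠ 0)
    (hprime : ∀ r : ℕ, r.Prime → r ∣ q ^ m + 1 → r = 2) : m = 1 := by
  rcases Nat.even_or_odd m with hme | hmo
  · exfalso
    obtain ⟨t, rfl⟩ := hme
    obtain ⟨j, hj⟩ := hodd.pow (n := t)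
    have hqt : q ≤ q ^ t := Nat.le_self_pow (by omega) q
    have hfac : q ^ (t + t) + 1 = 2 * (2 * (j * j + j) + 1) := by
      rw [pow_add, hj]; ring
    have hne : 2 * (j * j + j) + 1 ≠ 1 := by
      have : 0 < j := by omega
      have := Nat.mul_pos this this
      omega
    obtain ⟨r, hr, hrd⟩ := Nat.exists_prime_and_dvd hne
    have := hprime r hr (hfac ▸ hrd.mul_left 2)
    rw [this] at hrd
    omega
  · set S : ℤ := ∑ i ∈ Finset.range m, (q : ℤ) ^ i * (-1) ^ (m - 1 - i)
    have hS : S * ((q : ℤ) - (-1)) = (q : ℤ) ^ m - (-1) ^ m := geom_sum₂_mul _ _ _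
    rw [hmo.neg_one_pow, sub_neg_eq_add, sub_neg_eq_add] at hS
    have hS2 : ¬ (2 : ℤ) ∣ S := by
      have := Nat.odd_iff.mp hodd
      have := Nat.odd_iff.mp hmo
      exact not_dvd_geom_sum₂ Int.prime_two (by omega) (by omega) (by push_cast; omega)
    have hS1 : S.natAbs = 1 := by
      by_contra hne
      obtain ⟨r, hr, hrd⟩ := Nat.exists_prime_and_dvd hne
      have h1 : (r : ℤ) ∣ S := Int.natCast_dvd.mpr hrd
      have h2 : r = 2 := hprime r hr (by
        have := h1.mul_right ((q : ℤ) + 1)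
        rw [hS] at this
        exact_mod_cast this)
      subst h2
      exact hS2 h1
    have hle : q ^ m + 1 = q + 1 := by
      have h := congrArg Int.natAbs hS
      rw [Int.natAbs_mul, hS1, one_mul] at h
      have h1 : ((q : ℤ) + 1).natAbs = q + 1 := by omega
      have h2 : ((q : ℤ) ^ m + 1).natAbs = q ^ m + 1 := by
        rw [show ((q : ℤ) ^ m + 1) = ((q ^ m + 1 : ℕ) : ℤ) by push_cast; rfl, Int.natAbs_natCast]
      omega
    have : q ^ m = q ^ 1 := by rw [pow_one]; omega
    exact Nat.pow_right_injective (by omega : 2 ≤ q) this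

lemma eq_one_or_of_prime_dvd_geom_sum {q m k : ℕ} (hq : 3 ≤ q) (hodd : Odd q) (hm : m ≠ 0)
    (hk : k ≠ 0)
    (hprime : ∀ r : ℕ, r.Prime → r ∣ ∑ i ∈ Finset.range k, (q ^ m) ^ i → r ∣ q - 1) :
    k = 1 ∨ m * k = 2 := by
  have hQ : 3 ≤ q ^ m := hq.trans (Nat.le_self_pow hm q)
  have hsub : q - 1 ∣ q ^ m - 1 := by simpa using Nat.sub_dvd_pow_sub_pow q 1 m
  rcases (by omega : k = 1 ∨ k = 2 ∨ 3 ≤ k) with rfl | rfl | hk3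
  · exact Or.inl rfl
  · right
    have : m = 1 := by
      refine eq_one_of_pow_add_one hq hodd hm fun r hr hrd => ?_
      have h1 := (hprime r hr (by simpa [Finset.sum_range_succ, add_comm] using hrd)).trans hsub
      have h2 := Nat.dvd_sub hrd h1
      rw [show q ^ m + 1 - (q ^ m - 1) = 2 by omega] at h2
      exact (Nat.prime_dvd_prime_iff_eq hr Nat.prime_two).mp h2
    omega
  · exfalso
    have h1 := two_mul_geom_sum_dvd hQ hodd.pow hk fun r hr h => (hprime r hr h).trans hsub
    exact absurd (Nat.le_of_dvd (by positivity) h1) (lt_two_mul_geom_sum hQ hk3).not_ge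

/-- If an intermediate field `M` contains `L ∩ C`, then it contains `x ^ [Eˣ : C]` for a generator
`x` of the cyclic group `Lˣ`; hence `|Lˣ|` divides `[Eˣ : C] * |Mˣ|`. -/
lemma card_sub_one_dvd_index_mul {K E : Type*} [Field K] [Field E] [Finite E] [Algebra K E]
    (C : Subgroup Eˣ) (L M : IntermediateField K E)
    (hM : (Units.val '' (C : Set Eˣ)) ∩ (L : Set E) ⊆ M) :
    Nat.card L - 1 ∣ C.index * (Nat.card M - 1) := by
  obtain ⟨x, hx⟩ := IsCyclic.exists_ofOrder_eq_natCard (α := Lˣ)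
  rw [← Nat.card_units, ← hx, orderOf_dvd_iff_pow_eq_one]
  have hmem : ((x : L) : E) ^ C.index ∈ M := by
    refine hM ⟨⟨Units.map (algebraMap L E).toMonoidHom x ^ C.index, C.pow_index_mem _, rfl⟩, ?_⟩
    exact pow_mem (x : L).2 _
  have hpow : (⟨_, hmem⟩ : M) ^ (Nat.card M - 1) = 1 := by
    have := Fintype.ofFinite M
    rw [Nat.card_eq_fintype_card]
    refine FiniteField.pow_card_sub_one_eq_one _ fun h => ?_
    have h' : ((x : L) : E) ^ C.index = 0 := congrArg Subtype.val h
    exact x.ne_zero (Subtype.ext (eq_zero_of_pow_eq_zero h'))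
  have hpow' := congrArg Subtype.val hpow
  ext
  simpa [pow_mul] using hpow'


/-- Let `q` be a Mersenne prime, `e > 1` even, `F = 𝔽_q = ZMod q`, `E = 𝔽_{q^e}`, and `C ≤ Eˣ`
a subgroup such that every prime dividing `[Eˣ : C]` divides `q - 1` and `4 ∤ |C|`.  Then every
intermediate field `F ≤ L ≤ E` other than `𝔽_{q^2}` (i.e. with `|L| ≠ q^2`) is generated over `F`
by the elements of `C` lying in `L`. -/
theorem intermediateField_eq_adjoin_inter_units_subgroup
    (q p e : ℕ) (hp : Nat.Prime p) (hq : q = 2 ^ p - 1) [Fact (Nat.Prime q)]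
    (he : 1 < e) (heven : Even e)
    (E : Type) [Field E] [Fintype E] [Algebra (ZMod q) E]
    (hcard : Fintype.card E = q ^ e)
    (C : Subgroup Eˣ)
    (hCindex : ∀ r : ℕ, r.Prime → r ∣ C.index → r ∣ q - 1)
    (hC4 : ¬ (4 ∣ Nat.card C))
    (L : IntermediateField (ZMod q) E) (hL : Nat.card L ≠ q ^ 2) :
    L = IntermediateField.adjoin (ZMod q) ((Units.val '' (C : Set Eˣ)) ∩ (L : Set E)) := by
  set M := IntermediateField.adjoin (ZMod q) ((Units.val '' (C : Set Eˣ)) ∩ (L : Set E)) with hMdef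
  have hML : M ≤ L := IntermediateField.adjoin_le_iff.mpr Set.inter_subset_right
  obtain ⟨k, hk⟩ := IntermediateField.finrank_dvd_of_le_right hML
  set m := Module.finrank (ZMod q) M with hm
  have hcardM : Nat.card M = q ^ m := by
    rw [Module.natCard_eq_pow_finrank (K := ZMod q), Nat.card_zmod]
  have hcardL : Nat.card L = (q ^ m) ^ k := by
    rw [Module.natCard_eq_pow_finrank (K := ZMod q), Nat.card_zmod, hk, pow_mul]
  have hm0 : m ≠ 0 := Module.finrank_pos.ne'
  have hk0 : k ≠ 0 := by
    rintro rfl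
    exact (Module.finrank_pos (R := ZMod q) (M := L)).ne' hk
  have h4 : 2 ^ 2 ≤ 2 ^ p := Nat.pow_le_pow_right two_pos hp.two_le
  have hq3 : 3 ≤ q := by omega
  have hodd : Odd q := (Fact.out : q.Prime).odd_of_ne_two (by omega)
  have hQ : 3 ≤ q ^ m := hq3.trans (Nat.le_self_pow hm0 q)
  have hdvd := card_sub_one_dvd_index_mul C L M (IntermediateField.subset_adjoin _ _)
  have hmul : (∑ i ∈ Finset.range k, (q ^ m) ^ i) * (q ^ m - 1) = (q ^ m) ^ k - 1 :=
    geom_sum_mul_sub_one (by omega) k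
  rw [hcardL, hcardM, ← hmul] at hdvd
  have hN := Nat.dvd_of_mul_dvd_mul_right (by omega) hdvd
  rcases eq_one_or_of_prime_dvd_geom_sum hq3 hodd hm0 hk0
    fun r hr hrd => hCindex r hr (hrd.trans hN) with rfl | h2
  · exact (IntermediateField.eq_of_le_of_finrank_eq hML (by rw [hk, mul_one])).symm
  · exact absurd (by rw [hcardL, ← pow_mul, h2]) hL
end

section
/- Every element of C that lies in the unique degree-2 intermediate field 𝔽_{q^2} already lies in F; that is, 𝔽_{q^2} ∩ C = F ∩ C. -/
/-!
Let `x ∈ C ∩ K`. The order of `x` divides `|Kˣ| = q² - 1 = (q - 1) * 2 ^ p`, because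
`q + 1 = 2 ^ p`, and it is not divisible by `4`, because it divides `|C|`. As `q ≡ 3 (mod 4)`,
`q - 1` already contains one factor `2`, so the order divides `q - 1`
(`dvd_two_mul_of_dvd_two_mul_mul_two_pow`). Hence `x ^ q = x`, and the roots of `X ^ q - X` in `E`
are exactly the elements of the prime field (`mem_bot_of_pow_eq_self`).
-/

lemma dvd_two_mul_of_dvd_two_mul_mul_two_pow {n m p : ℕ} (h : n ∣ 2 * m * 2 ^ p)
    (h4 : ¬ 4 ∣ n) : n ∣ 2 * m := by
  rcases Nat.even_or_odd' n with ⟨k, rfl | rfl⟩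
  · have hk : Odd k := by
      rw [← Nat.not_even_iff_odd]
      rintro ⟨j, rfl⟩
      exact h4 ⟨j, by ring⟩
    rw [mul_assoc] at h
    exact mul_dvd_mul_left 2 ((hk.coprime_two_right.pow_right p).dvd_of_dvd_mul_right
      (Nat.dvd_of_mul_dvd_mul_left two_pos h))
  · exact ((odd_two_mul_add_one k).coprime_two_right.pow_right p).dvd_of_dvd_mul_right h

/-- The `q` elements of the prime field are roots of `X ^ q - X`, hence all of its roots. -/
lemma mem_bot_of_pow_eq_self {q : ℕ} [Fact (Nat.Prime q)] {E : Type} [Field E]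
    [Algebra (ZMod q) E] {x : E} (hx : x ^ q = x) :
    x ∈ (⊥ : IntermediateField (ZMod q) E) := by
  rw [IntermediateField.mem_bot]
  have hq : 1 < q := (Fact.out : q.Prime).one_lt
  have hroots := FiniteField.roots_X_pow_card_sub_X (ZMod q)
  rw [ZMod.card] at hroots
  have hsplit : (Polynomial.X ^ q - Polynomial.X : Polynomial (ZMod q)).Splits := by
    rw [Polynomial.splits_iff_card_roots, hroots,
      FiniteField.X_pow_card_sub_X_natDegree_eq _ hq]
    simp [ZMod.card]
  have hne := FiniteField.X_pow_card_sub_X_ne_zero (ZMod q) hq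
  exact hsplit.mem_range_of_isRoot hne (by simp [hx])


/-- Let `q` be a Mersenne prime, `e > 1` even, `F = 𝔽_q = ZMod q`, `E = 𝔽_{q^e}`, and `C ≤ Eˣ`
a subgroup such that every prime dividing `[Eˣ : C]` divides `q - 1` and `4 ∤ |C|`.  If `K` is
the unique intermediate field of degree `2` over `F` (i.e. `|K| = q^2`), then the elements of `C`
lying in `K` are exactly the elements of `C` lying in `F` (the bottom intermediate field), i.e.
`K ∩ C = F ∩ C`. -/
theorem inter_degree_two_subfield_eq_inter_bot
    (q p e : ℕ) (hp : Nat.Prime p) (hq : q = 2 ^ p - 1) [Fact (Nat.Prime q)]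
    (he : 1 < e) (heven : Even e)
    (E : Type) [Field E] [Fintype E] [Algebra (ZMod q) E]
    (hcard : Fintype.card E = q ^ e)
    (C : Subgroup Eˣ)
    (hCindex : ∀ r : ℕ, r.Prime → r ∣ C.index → r ∣ q - 1)
    (hC4 : ¬ (4 ∣ Nat.card C))
    (K : IntermediateField (ZMod q) E) (hK : Nat.card K = q ^ 2) :
    {x : Eˣ | x ∈ C ∧ (x : E) ∈ K}
      = {x : Eˣ | x ∈ C ∧ (x : E) ∈ (⊥ : IntermediateField (ZMod q) E)} := by
  have hq1 : q + 1 = 2 ^ p := by have := Nat.one_le_two_pow (n := p); omega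
  obtain ⟨m, hm⟩ : ∃ m, q - 1 = 2 * m := by
    obtain ⟨t, rfl⟩ : ∃ t, p = t + 1 := ⟨p - 1, by have := hp.one_lt; omega⟩
    exact ⟨2 ^ t - 1, by rw [pow_succ] at hq; omega⟩
  ext x
  refine ⟨fun ⟨hxC, hxK⟩ => ⟨hxC, mem_bot_of_pow_eq_self ?_⟩,
    fun ⟨hxC, hx⟩ => ⟨hxC, (bot_le : ⊥ ≤ K) hx⟩⟩
  have hdvd : orderOf x ∣ 2 * m * 2 ^ p := by
    have hKpow : (⟨x, hxK⟩ : K) ^ (q ^ 2 - 1) = 1 := by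
      have := Fintype.ofFinite K
      rw [← hK, Nat.card_eq_fintype_card]
      exact FiniteField.pow_card_sub_one_eq_one _ fun h => x.ne_zero (congrArg Subtype.val h)
    have hfac : q ^ 2 - 1 = 2 * m * 2 ^ p := by
      rw [← hm, ← hq1, mul_comm]
      simpa using Nat.sq_sub_sq q 1
    rw [← hfac]
    apply orderOf_dvd_of_pow_eq_one
    ext
    simpa using congrArg Subtype.val hKpow
  have h4 : ¬ 4 ∣ orderOf x := fun h => hC4 (h.trans (C.orderOf_dvd_natCard hxC))
  have hpow : x ^ (q - 1) = 1 := by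
    rw [← orderOf_dvd_iff_pow_eq_one, hm]
    exact dvd_two_mul_of_dvd_two_mul_mul_two_pow hdvd h4
  have hxq : x ^ q = x := by
    rw [← Nat.sub_add_cancel (Fact.out : q.Prime).one_le, pow_succ, hpow, one_mul]
  exact_mod_cast congrArg Units.val hxq
end

section
/- The group G = C ⋊ Γ has no irreducible complex representation of dimension 2; that is, 2 ∉ cd(G). -/
open CategoryTheory

/-!
Suppose `ρ` is an irreducible representation of `G = C ⋊ Γ` on a complex plane `W`. Let `c ∈ C`,
let `σ` be the Frobenius generator of `Γ`, and put `A = ρ(c)`, `S = ρ(σ)`. Since `σ` raises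
elements of `C` to the power `q`, `S A S⁻¹ = A ^ q`, so `a ↦ a ^ q` maps the spectrum of `A` onto
itself. The spectrum has at most two elements, so the square of this map is the identity on it, and
as `A` has finite order it is diagonalisable; hence `A ^ (q ^ 2) = A`
(`pow_sq_eq_self_of_conj_pow`). The order of `A` therefore divides
`q ^ 2 - 1 = (q - 1) * 2 ^ p`; it also divides `|C|`, so it is not divisible by `4`, and as `q - 1`
is even it divides `q - 1` (`dvd_of_dvd_mul_two_pow`). So `A ^ q = A`, that is, `S` commutes with
`A`. As `σ` generates `Γ`, all of `ρ(G)` is commutative, and Schur's lemma contradicts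
`dim W = 2` (`FDRep.finrank_ne_two_of_commute`).
-/

lemma dvd_of_dvd_mul_two_pow {d m p : ℕ} (h : d ∣ m * 2 ^ p) (h4 : ¬ 4 ∣ d) (hm : 2 ∣ m) :
    d ∣ m := by
  rcases Nat.even_or_odd d with hd | hd
  · obtain ⟨k, rfl⟩ := hd.two_dvd
    have hk : Odd k := by
      rw [← Nat.not_even_iff_odd]
      rintro hk
      obtain ⟨j, rfl⟩ := hk.two_dvd
      exact h4 ⟨j, by ring⟩
    have hc : Nat.Coprime k 2 := hk.coprime_two_right
    exact hc.symm.mul_dvd_of_dvd_of_dvd hm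
      ((hc.pow_right p).dvd_of_dvd_mul_right ((Dvd.intro_left _ rfl).trans h))
  · have hc : Nat.Coprime d 2 := hd.coprime_two_right
    exact (hc.pow_right p).dvd_of_dvd_mul_right h

lemma apply_apply_eq_of_image_eq_of_card_le_two {α : Type*} [DecidableEq α] {s : Finset α}
    {f : α → α} (hs : s.card ≤ 2) (hf : s.image f = s) {x : α} (hx : x ∈ s) : f (f x) = x := by
  have hinj : Set.InjOn f s := Finset.card_image_iff.mp (by rw [hf])
  have hmem : ∀ y ∈ s, f y ∈ s := fun y hy => hf ▸ Finset.mem_image_of_mem f hy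
  by_cases h : f x = x
  · rw [h, h]
  by_contra h2
  have h3 : f (f x) ≠ f x := fun h' => h (hinj (hmem x hx) hx h')
  have hsub : ({x, f x, f (f x)} : Finset α) ⊆ s := by
    intro y hy
    simp only [Finset.mem_insert, Finset.mem_singleton] at hy
    rcases hy with rfl | rfl | rfl
    exacts [hx, hmem _ hx, hmem _ (hmem _ hx)]
  have := Finset.card_le_card hsub
  rw [Finset.card_eq_three.mpr ⟨x, f x, f (f x), Ne.symm h, Ne.symm h2, Ne.symm h3, rfl⟩] at this
  omega

/-- An automorphism of finite order of a complex plane that is conjugate to its `q`-th power is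
fixed by the `q ^ 2`-th power map: this map fixes each of its at most two eigenvalues. -/
lemma pow_sq_eq_self_of_conj_pow {V : Type*} [AddCommGroup V] [Module ℂ V]
    [FiniteDimensional ℂ V] (hV : Module.finrank ℂ V = 2) {A : Module.End ℂ V}
    {S : (Module.End ℂ V)ˣ} {n q : ℕ} (hn : 0 < n) (hq : 0 < q) (hA : A ^ n = 1)
    (hS : (S : Module.End ℂ V) * A * (↑S⁻¹ : Module.End ℂ V) = A ^ q) : A ^ (q ^ 2) = A := by
  classical
  have hss : A.IsSemisimple := by
    refine Module.End.isSemisimple_of_squarefree_aeval_eq_zero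
      (p := (Polynomial.X ^ n - 1 : Polynomial ℂ)) ?_ (by simp [hA])
    exact ((Polynomial.X_pow_sub_one_separable_iff).mpr
      (by exact_mod_cast hn.ne')).squarefree
  have hss' : (A ^ (q ^ 2) - A).IsSemisimple := by
    have := hss.aeval (Polynomial.X ^ (q ^ 2) - Polynomial.X)
    simpa using this
  have himg : (· ^ q) '' spectrum ℂ A = spectrum ℂ A := by
    rw [← spectrum.map_pow_of_pos A hq, ← hS, spectrum.units_conjugate]
  have hroots : ((A.charpoly.roots.toFinset : Finset ℂ) : Set ℂ) = spectrum ℂ A := by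
    ext μ
    rw [Module.End.mem_spectrum_iff_isRoot_charpoly]
    simp [A.charpoly_monic.ne_zero]
  have hcard : A.charpoly.roots.toFinset.card ≤ 2 := by
    refine (Multiset.toFinset_card_le _).trans ((Polynomial.card_roots' _).trans ?_)
    rw [LinearMap.charpoly_natDegree, hV]
  have hfix : ∀ μ ∈ spectrum ℂ A, μ ^ (q ^ 2) = μ := by
    intro μ hμ
    have := apply_apply_eq_of_image_eq_of_card_le_two (f := fun x : ℂ => x ^ q) hcard
      (by rw [← Finset.coe_inj, Finset.coe_image, hroots, himg]) (x := μ)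
      (by rw [← Finset.mem_coe, hroots]; exact hμ)
    simpa [← pow_mul, sq] using this
  rw [← sub_eq_zero, hss'.eq_zero_iff_forall_eigenvalue]
  intro μ hμ
  have hne : Nontrivial V := Module.nontrivial_of_finrank_pos (R := ℂ) (by omega)
  have h1 : μ ∈ spectrum ℂ (Polynomial.aeval A
      (Polynomial.X ^ (q ^ 2) - Polynomial.X : Polynomial ℂ)) := by
    simpa using hμ.mem_spectrum
  rw [spectrum.map_polynomial_aeval_of_nonempty _ _
    (spectrum.nonempty_of_isAlgClosed_of_finiteDimensional ℂ A)] at h1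
  obtain ⟨ν, hν, rfl⟩ := h1
  simp [hfix ν hν]

/-- Schur's lemma. -/
lemma FDRep.exists_eq_smul_one_of_commute {G : Type} [Group G] (W : FDRep ℂ G) [Simple W]
    (f : Module.End ℂ W) (hf : ∀ g, Commute f (W.ρ g)) : ∃ c : ℂ, f = c • 1 := by
  let F : W ⟶ W := ⟨FGModuleCat.ofHom f, fun g => by
    ext v
    exact LinearMap.congr_fun (hf g).eq v⟩
  obtain ⟨c, hc⟩ := (finrank_eq_one_iff_of_nonzero' (𝟙 W) (id_nonzero W)).mp
    (finrank_endomorphism_simple_eq_one ℂ W) F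
  refine ⟨c, ?_⟩
  ext v
  have := congrArg (fun H : W ⟶ W => H.hom.hom.hom v) hc
  exact this.symm

/-- Every `ρ(g)` is a scalar by Schur's lemma; hence every endomorphism of `W` commutes with
`ρ(G)`, and is a scalar as well. -/
lemma FDRep.finrank_ne_two_of_commute {G : Type} [Group G] (W : FDRep ℂ G) [Simple W]
    (h : ∀ g k, Commute (W.ρ g) (W.ρ k)) : Module.finrank ℂ W ≠ 2 := by
  intro h2
  have hall : ∀ f : Module.End ℂ W, ∃ c : ℂ, c • (1 : Module.End ℂ W) = f := by
    intro f
    obtain ⟨c, hc⟩ := W.exists_eq_smul_one_of_commute f fun g => by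
      obtain ⟨a, ha⟩ := W.exists_eq_smul_one_of_commute (W.ρ g) (h g)
      rw [ha]
      exact (Commute.one_right f).smul_right a
    exact ⟨c, hc.symm⟩
  have hle : Module.finrank ℂ (Module.End ℂ W) ≤ 1 := finrank_le_one 1 hall
  rw [Module.finrank_linearMap, h2] at hle
  omega

/-- Let `q` be a Mersenne prime, `e > 1` even, `F = 𝔽_q = ZMod q`, `E = 𝔽_{q^e}`,
`Γ = Gal(E/F)`, `C ≤ Eˣ` with every prime dividing `[Eˣ : C]` dividing `q - 1` and `4 ∤ |C|`,
and `G = C ⋊ Γ`.  Then `G` has no irreducible complex representation of dimension `2`. -/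
theorem two_not_mem_cd_semidirectProduct
    (q p e : ℕ) (hp : Nat.Prime p) (hq : q = 2 ^ p - 1) [Fact (Nat.Prime q)]
    (he : 1 < e) (heven : Even e)
    (E : Type) [Field E] [Fintype E] [Algebra (ZMod q) E]
    (hcard : Fintype.card E = q ^ e)
    (C : Subgroup Eˣ)
    (hCindex : ∀ r : ℕ, r.Prime → r ∣ C.index → r ∣ q - 1)
    (hC4 : ¬ (4 ∣ Nat.card C))
    (φ : (E ≃ₐ[ZMod q] E) →* MulAut C)
    (hφ : ∀ (τ : E ≃ₐ[ZMod q] E) (x : C), ((φ τ x : Eˣ) : E) = τ ((x : Eˣ) : E)) :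
    ¬ ∃ W : FDRep ℂ (SemidirectProduct C (E ≃ₐ[ZMod q] E) φ),
        Simple W ∧ Module.finrank ℂ W = 2 := by
  rintro ⟨W, hW, h2⟩
  have hqpos : 0 < q := (Fact.out : Nat.Prime q).pos
  have hq1 : q + 1 = 2 ^ p := by have := Nat.one_le_two_pow (n := p); omega
  have hqeven : 2 ∣ q - 1 := by
    have : 2 ∣ 2 ^ p := dvd_pow_self 2 hp.ne_zero
    omega
  let σ : E ≃ₐ[ZMod q] E := FiniteField.frobeniusAlgEquivOfAlgebraic (ZMod q) E
  have hσ : ∀ c : C, φ σ c = c ^ q := by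
    intro c
    apply Subtype.ext
    apply Units.ext
    rw [hφ]
    simp [σ, FiniteField.coe_frobeniusAlgEquivOfAlgebraic, ZMod.card]
  have hgen : ∀ τ : E ≃ₐ[ZMod q] E, ∃ k : ℕ, σ ^ k = τ := fun τ =>
    let ⟨k, hk⟩ := (FiniteField.bijective_frobeniusAlgEquivOfAlgebraic_pow (ZMod q) E).2 τ
    ⟨k, hk⟩
  let A : C → Module.End ℂ W := fun c => W.ρ (SemidirectProduct.inl c)
  let S : (Module.End ℂ W)ˣ := Units.map W.ρ (toUnits (SemidirectProduct.inr σ))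
  have hS : (S : Module.End ℂ W) = W.ρ (SemidirectProduct.inr σ) := rfl
  have hS' : ((S⁻¹ : (Module.End ℂ W)ˣ) : Module.End ℂ W) = W.ρ (SemidirectProduct.inr σ⁻¹) := by
    rw [map_inv]; rfl
  have hconj : ∀ c : C, (S : Module.End ℂ W) * A c * (↑S⁻¹ : Module.End ℂ W) = A c ^ q := by
    intro c
    rw [hS, hS']
    simp only [A]
    rw [← map_mul, ← map_mul, ← SemidirectProduct.inl_aut, hσ, map_pow, map_pow]
  have hn : 0 < Nat.card C := Nat.card_pos
  have hAn : ∀ c : C, A c ^ Nat.card C = 1 := by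
    intro c
    simp only [A]
    rw [← map_pow, ← map_pow, pow_card_eq_one', map_one, map_one]
  have hAq : ∀ c : C, A c ^ q = A c := by
    intro c
    have h1 : A c ^ (q ^ 2) = A c := pow_sq_eq_self_of_conj_pow h2 hn hqpos (hAn c) (hconj c)
    have hU : IsUnit (A c) := IsUnit.of_pow_eq_one (hAn c) hn.ne'
    have h3 : A c ^ ((q - 1) * 2 ^ p) = 1 := by
      have hexp : (q - 1) * 2 ^ p + 1 = q ^ 2 := by
        rw [← hq1]
        obtain ⟨r, rfl⟩ := Nat.exists_eq_add_of_le' hqpos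
        simp only [Nat.add_sub_cancel]
        ring
      apply hU.mul_right_cancel
      rw [← pow_succ, hexp, h1, one_mul]
    have h4 : orderOf (A c) ∣ q - 1 := dvd_of_dvd_mul_two_pow (orderOf_dvd_of_pow_eq_one h3)
      (fun h => hC4 (h.trans (orderOf_dvd_of_pow_eq_one (hAn c)))) hqeven
    have h5 : A c ^ (q - 1 + 1) = A c := by
      rw [pow_succ, orderOf_dvd_iff_pow_eq_one.mp h4, one_mul]
    rwa [Nat.sub_add_cancel hqpos] at h5
  have hcomm : ∀ c : C, Commute (A c) S := by
    intro c
    have h := hconj c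
    rw [hAq, Units.mul_inv_eq_iff_eq_mul] at h
    exact h.symm
  have hAA : ∀ c d : C, Commute (A c) (A d) := by
    intro c d
    simp only [A, Commute, SemiconjBy]
    rw [← map_mul, ← map_mul, ← map_mul, ← map_mul, mul_comm]
  have hform : ∀ g, ∃ (c : C) (k : ℕ), W.ρ g = A c * (S : Module.End ℂ W) ^ k := by
    intro g
    obtain ⟨k, hk⟩ := hgen g.right
    refine ⟨g.left, k, ?_⟩
    rw [hS, ← map_pow, ← map_pow, hk, ← map_mul, SemidirectProduct.inl_left_mul_inr_right]
  refine W.finrank_ne_two_of_commute (fun g k => ?_) h2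
  obtain ⟨c, i, hg⟩ := hform g
  obtain ⟨d, j, hk⟩ := hform k
  rw [hg, hk]
  exact ((hAA c d).mul_right ((hcomm c).pow_right j)).mul_left
    (((hcomm d).symm.pow_left i).mul_right (Commute.pow_pow_self _ i j))
end

section
/- Let σ denote the Frobenius automorphism generating Γ = Gal(E/F). If x ∈ C satisfies σ²(x) = x, then σ(x) = x; equivalently, every element of C fixed by σ² lies in F. -/
/-!
Since `q + 1 = 2 ^ p`, the order `n` of `x` divides `q ^ 2 - 1 = 2 ^ p * (q - 1)`, and
`q - 1 = 2 * m` with `m = 2 ^ (p - 1) - 1` odd. As `n` divides `|C|`, it is not divisible by `4`,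
so only one factor `2` can survive and `n ∣ 2 * m = q - 1`. Hence `x ^ q = x`, and the solutions of
this equation are exactly the elements of the prime field.
-/

lemma dvd_two_mul_of_not_four_dvd {n k m : ℕ} (h : n ∣ 2 ^ k * m) (h4 : ¬ 4 ∣ n) :
    n ∣ 2 * m := by
  rcases Nat.even_or_odd n with he | ho
  · obtain ⟨a, rfl⟩ := he.two_dvd
    have ha : Nat.Coprime a (2 ^ k) := by
      refine Nat.Coprime.pow_right _ (Nat.coprime_two_right.2 ?_)
      rw [← Nat.not_even_iff_odd]
      rintro ⟨b, rfl⟩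
      exact h4 ⟨b, by ring⟩
    exact Nat.mul_dvd_mul_left 2 (ha.dvd_of_dvd_mul_left ((Dvd.intro_left 2 rfl).trans h))
  · have ha : Nat.Coprime n (2 ^ k) := (Nat.coprime_two_right.2 ho).pow_right _
    exact (ha.dvd_of_dvd_mul_left h).trans (Dvd.intro_left 2 rfl)


/-- Let `q` be a Mersenne prime, `e > 1` even, `F = 𝔽_q = ZMod q`, `E = 𝔽_{q^e}`, and let `σ`
be the Frobenius automorphism `x ↦ x^q` generating `Gal(E/F)`.  Let `C ≤ Eˣ` be a subgroup such
that every prime dividing `[Eˣ : C]` divides `q - 1` and `4 ∤ |C|`.  If `x ∈ C` satisfies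
`σ² x = x` (i.e. `(x^q)^q = x`), then `σ x = x` (i.e. `x^q = x`); equivalently, `x` lies in `F`
(the bottom intermediate field). -/
theorem frobenius_fixed_of_frobenius_sq_fixed
    (q p e : ℕ) (hp : Nat.Prime p) (hq : q = 2 ^ p - 1) [Fact (Nat.Prime q)]
    (he : 1 < e) (heven : Even e)
    (E : Type) [Field E] [Fintype E] [Algebra (ZMod q) E]
    (hcard : Fintype.card E = q ^ e)
    (C : Subgroup Eˣ)
    (hCindex : ∀ r : ℕ, r.Prime → r ∣ C.index → r ∣ q - 1)
    (hC4 : ¬ (4 ∣ Nat.card C))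
    (x : Eˣ) (hx : x ∈ C) (hfix : ((x : E) ^ q) ^ q = (x : E)) :
    (x : E) ^ q = (x : E) ∧ (x : E) ∈ (⊥ : IntermediateField (ZMod q) E) := by
  obtain ⟨k, rfl⟩ : ∃ k, p = k + 1 := ⟨p - 1, by have := hp.two_le; omega⟩
  have hk : 1 ≤ 2 ^ k := Nat.one_le_two_pow
  have hqm : q = 2 * (2 ^ k - 1) + 1 := by rw [pow_succ] at hq; omega
  have hx4 : ¬ 4 ∣ orderOf x := fun h ↦ hC4 <| h.trans (C.orderOf_dvd_natCard hx)
  have hxx : x ^ (2 ^ (k + 1 + 1) * (2 ^ k - 1)) = 1 := by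
    have hsq : x ^ (q * q) = x := Units.ext (by simpa [pow_mul] using hfix)
    have hexp : q * q = 2 ^ (k + 1 + 1) * (2 ^ k - 1) + 1 := by
      obtain ⟨m, hm⟩ : ∃ m, 2 ^ k = m + 1 := ⟨2 ^ k - 1, by omega⟩
      rw [hqm, pow_succ, pow_succ, hm, Nat.add_sub_cancel]
      ring
    rw [hexp, pow_succ] at hsq
    exact mul_eq_right.1 hsq
  have hone : x ^ (2 * (2 ^ k - 1)) = 1 := orderOf_dvd_iff_pow_eq_one.1
    (dvd_two_mul_of_not_four_dvd (orderOf_dvd_of_pow_eq_one hxx) hx4)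
  have hfixed : (x : E) ^ q = x := by
    rw [hqm, pow_succ, ← Units.val_pow_eq_pow_val, hone, Units.val_one, one_mul]
  refine ⟨hfixed, ?_⟩
  haveI : CharP E q := charP_of_injective_algebraMap (algebraMap (ZMod q) E).injective q
  have hbot : (x : E) ∈ (⊥ : Subfield E) := (Subfield.mem_bot_iff_pow_eq_self E q).2 hfixed
  exact (bot_le : (⊥ : Subfield E) ≤ (⊥ : IntermediateField (ZMod q) E).toSubfield) hbot
end

section
/- For every intermediate field L with F ≤ L ≤ E and L ≠ 𝔽_{q^2}, the subgroup of Γ = Gal(E/F) consisting of automorphisms that fix every element of L ∩ C equals Gal(E/L); that is, an automorphism of E over F fixes all elements of C lying in L if and only if it fixes L pointwise. -/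
/-!
Write `|L| = q ^ m` and let `K` be the field of elements of `L` fixed by `τ`, with `|K| = q ^ d`,
so that `d ∣ m`.  If `x` generates the cyclic group `Lˣ`, then `x ^ [Eˣ : C]` lies in `L ∩ C`,
hence in `K`, and therefore `q ^ m - 1 ∣ [Eˣ : C] * (q ^ d - 1)`.  The theorem becomes the
arithmetic statement `not_dvd_mul_pow_sub_one`: for `d < m` and `m ≠ 2` this is impossible when
every prime factor of the index divides `q - 1`.

Enlarging `d`, one may assume that `m / d = n` is prime.  With `Q = q ^ d`, the number
`N = 1 + Q + ⋯ + Q ^ (n - 1)` divides the index, so every prime `ℓ ∣ N` divides `Q - 1`; then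
`N ≡ n` modulo `ℓ` forces `ℓ = n`, and `N` is a power of `n`.  If `n` is odd, then `n ^ 2 ∤ N`
(lifting the exponent) while `N > n`.  If `n = 2`, then `q ^ d + 1` is a power of two with
`d ≥ 2`, which is impossible for odd `q`.
-/

/-- The sum `q ^ d + 1` is not a power of two, for `q` odd and `d ≥ 2`.  For `d` even it is `2`
modulo `4`.  For `d` odd it would be a power of two properly divisible by `q + 1`, hence divisible
by `2 * (q + 1)`; but `q ^ d + 1` is congruent to `q + 1` modulo `2 * (q + 1)`. -/
theorem pow_add_one_ne_two_pow_s9 {q d : ℕ} (hq : 3 ≤ q) (hodd : Odd q) (hd : 2 ≤ d) (k : ℕ) :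
    q ^ d + 1 ≠ 2 ^ k := by
  intro h
  have hlt : q ^ 1 < q ^ d := Nat.pow_lt_pow_right (by omega) (by omega)
  rw [pow_one] at hlt
  rcases Nat.even_or_odd' d with ⟨t, rfl | rfl⟩
  · have h4 : 2 ^ 2 ∣ 2 ^ k := by
      apply pow_dvd_pow
      by_contra hk
      have : 2 ^ k ≤ 2 ^ 1 := Nat.pow_le_pow_right (by norm_num) (by omega)
      omega
    rw [← h, mul_comm, pow_mul] at h4
    obtain ⟨s, hs⟩ := hodd.pow (n := t)
    rw [hs] at h4
    have : (2 * s + 1) ^ 2 + 1 = 4 * (s ^ 2 + s) + 2 := by ring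
    omega
  · have h1 : q + 1 ∣ 2 ^ k := by
      rw [← h]
      simpa using Odd.nat_add_dvd_pow_add_pow q 1 (n := 2 * t + 1) ⟨t, rfl⟩
    obtain ⟨a, -, ha⟩ := (Nat.dvd_prime_pow Nat.prime_two).1 h1
    have hak : a < k := (Nat.pow_lt_pow_iff_right (a := 2) (by norm_num)).1 (by omega)
    have h2 : 2 * (q + 1) ∣ q ^ (2 * t + 1) + 1 := by
      rw [h, ha, ← pow_succ']
      exact pow_dvd_pow _ hak
    have h3 : 2 * (q + 1) ∣ q ^ (2 * t) - 1 := by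
      have h5 : 2 * (q + 1) ∣ q ^ 2 - 1 := by
        obtain ⟨s, rfl⟩ := hodd
        refine ⟨s, ?_⟩
        have : (2 * s + 1) ^ 2 = 2 * (2 * s + 1 + 1) * s + 1 := by ring
        omega
      refine h5.trans ?_
      simpa [pow_mul] using Nat.sub_dvd_pow_sub_pow (q ^ 2) 1 t
    have h6 : q ^ (2 * t + 1) + 1 = q * (q ^ (2 * t) - 1) + (q + 1) := by
      have : 0 < q ^ (2 * t) := by positivity
      obtain ⟨u, hu⟩ := Nat.exists_eq_add_of_lt this
      rw [pow_succ, hu]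
      simp only [zero_add, Nat.add_sub_cancel]
      ring
    rw [h6] at h2
    have h7 := (Nat.dvd_add_right (h3.mul_left q)).1 h2
    have := Nat.le_of_dvd (by omega) h7
    omega

open Finset in
/-- If `n` is an odd prime and `Q > 1`, then `1 + Q + ⋯ + Q ^ (n - 1)` has a prime factor that
does not divide `Q - 1`: otherwise the sum would be a power of `n` exceeding `n`, against lifting
the exponent. -/
theorem exists_prime_dvd_geom_sum_of_odd {Q n : ℕ} (hQ : 1 < Q) (hn : n.Prime) (hodd : Odd n) :
    ∃ l : ℕ, l.Prime ∧ l ∣ ∑ i ∈ range n, Q ^ i ∧ ¬ l ∣ Q - 1 := by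
  by_contra! h
  have hZ : ∀ l : ℕ, l ∣ Q - 1 → (l : ℤ) ∣ (Q : ℤ) - 1 := by
    intro l hl
    have := Int.natCast_dvd_natCast.2 hl
    rwa [Nat.cast_sub hQ.le, Nat.cast_one] at this
  have hlt : n < ∑ i ∈ range n, Q ^ i := by
    calc n = ∑ i ∈ range n, 1 := by simp
      _ < _ := by
        apply Finset.sum_lt_sum
        · intro i _
          exact Nat.one_le_pow _ _ (by omega)
        · exact ⟨1, by simpa using hn.one_lt, by simpa using hQ⟩
  -- Modulo a divisor of `Q - 1` the sum is `n`.
  have huniq : ∀ {l : ℕ}, l.Prime → l ∣ ∑ i ∈ range n, Q ^ i → l = n := by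
    intro l hl hdvd
    have h1 := hZ l (h l hl hdvd)
    have h2 := (dvd_geom_sum₂_iff_of_dvd_sub (n := n) h1).1 (by
      have := Int.natCast_dvd_natCast.2 hdvd
      push_cast at this
      simpa using this)
    rw [one_pow, mul_one] at h2
    exact (Nat.prime_dvd_prime_iff_eq hl hn).1 (Int.natCast_dvd_natCast.1 h2)
  have hpow := Nat.eq_prime_pow_of_unique_prime_dvd (by omega) huniq
  set k := (∑ i ∈ range n, Q ^ i).primeFactorsList.length
  have hk : 2 ≤ k := by
    by_contra hk
    have : n ^ k ≤ n ^ 1 := Nat.pow_le_pow_right hn.pos (by omega)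
    rw [pow_one] at this
    omega
  have hnN : n ^ 2 ∣ ∑ i ∈ range n, Q ^ i := hpow ▸ pow_dvd_pow n hk
  have hnQ : (n : ℤ) ∣ (Q : ℤ) - 1 := hZ n (h n hn ((dvd_pow_self n (by norm_num)).trans hnN))
  have hnp : Prime (n : ℤ) := Nat.prime_iff_prime_int.1 hn
  have hnx : ¬ (n : ℤ) ∣ (Q : ℤ) := fun hd =>
    hnp.not_dvd_one ((dvd_sub_right hd).1 hnQ)
  have hm := emultiplicity_geom_sum₂_eq_one hnp hodd hnQ hnx
  have h2 : (n : ℤ) ^ 2 ∣ ∑ i ∈ range n, (Q : ℤ) ^ i * 1 ^ (n - 1 - i) := by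
    have := Int.natCast_dvd_natCast.2 hnN
    push_cast at this
    simpa using this
  have h3 := le_emultiplicity_of_pow_dvd h2
  rw [hm] at h3
  norm_num at h3

open Finset in
/-- A weak form of Zsigmondy's theorem: for `d` a proper divisor of `m ≠ 2` and `q` odd, the
quotient `(q ^ m - 1) / (q ^ d - 1)` has a prime factor not dividing `q - 1`, so it divides no `c`
all of whose prime factors divide `q - 1`. -/
theorem not_dvd_mul_pow_sub_one {q d m c : ℕ} (hq : 3 ≤ q) (hqodd : Odd q) (hd : 0 < d)
    (hdm : d ∣ m) (hlt : d < m) (hm : m ≠ 2)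
    (hc : ∀ r : ℕ, r.Prime → r ∣ c → r ∣ q - 1) :
    ¬ q ^ m - 1 ∣ c * (q ^ d - 1) := by
  intro hdvd
  obtain ⟨s, rfl⟩ := hdm
  have hs : s ≠ 1 := by rintro rfl; omega
  obtain ⟨n, hn, t, rfl⟩ := Nat.exists_prime_and_dvd hs
  have ht : t ≠ 0 := by rintro rfl; simp at hlt
  -- Replacing `d` by `d * t` makes the cofactor the prime `n`.
  have hD : 0 < d * t := by positivity
  set D := d * t with hDdef
  have hQ : q ^ 1 ≤ q ^ D := Nat.pow_le_pow_right (by omega) hD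
  rw [pow_one] at hQ
  have hsub : q ^ d - 1 ∣ q ^ D - 1 := by
    simpa [hDdef, pow_mul] using Nat.sub_dvd_pow_sub_pow (q ^ d) 1 t
  have hmn : d * (n * t) = D * n := by rw [hDdef]; ring
  rw [hmn] at hdvd hm
  have hNc : ∑ i ∈ range n, (q ^ D) ^ i ∣ c := by
    have h1 := hdvd.trans (mul_dvd_mul_left c hsub)
    have h2 : (∑ i ∈ range n, (q ^ D) ^ i) * (q ^ D - 1) = q ^ (D * n) - 1 := by
      rw [Nat.geomSum_eq (by omega), pow_mul q D n]
      exact Nat.div_mul_cancel (by simpa using Nat.sub_dvd_pow_sub_pow (q ^ D) 1 n)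
    rw [← h2] at h1
    exact Nat.dvd_of_mul_dvd_mul_right (by omega) h1
  have hprime : ∀ l : ℕ, l.Prime → l ∣ ∑ i ∈ range n, (q ^ D) ^ i → l ∣ q ^ D - 1 := by
    intro l hl h
    exact (hc l hl (h.trans hNc)).trans (by simpa using Nat.sub_dvd_pow_sub_pow q 1 D)
  rcases hn.eq_two_or_odd' with rfl | hodd
  · have hD2 : 2 ≤ D := by omega
    have hsum : ∑ i ∈ range 2, (q ^ D) ^ i = q ^ D + 1 := by simp [sum_range_succ, add_comm]
    rw [hsum] at hprime
    refine pow_add_one_ne_two_pow_s9 hq hqodd hD2 _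
      (Nat.eq_prime_pow_of_unique_prime_dvd (by omega) fun {l} hl h => ?_)
    -- A prime dividing both `Q - 1` and `Q + 1` divides `2`.
    have h1 := hprime l hl h
    have h2 : l ∣ (q ^ D + 1) - (q ^ D - 1) := Nat.dvd_sub h h1
    have h3 : (q ^ D + 1) - (q ^ D - 1) = 2 := by omega
    rw [h3] at h2
    exact (Nat.prime_dvd_prime_iff_eq hl Nat.prime_two).1 h2
  · obtain ⟨l, hl, h1, h2⟩ := exists_prime_dvd_geom_sum_of_odd (Q := q ^ D) (by omega) hn hodd
    exact h2 (hprime l hl h1)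

/-- Let `q` be a Mersenne prime, `e > 1` even, `F = 𝔽_q = ZMod q`, `E = 𝔽_{q^e}`, and `C ≤ Eˣ`
a subgroup such that every prime dividing `[Eˣ : C]` divides `q - 1` and `4 ∤ |C|`.  For every
intermediate field `F ≤ L ≤ E` with `L ≠ 𝔽_{q^2}` (i.e. `|L| ≠ q^2`), an automorphism of `E`
over `F` fixes all elements of `C` lying in `L` if and only if it fixes `L` pointwise; that is,
the subgroup of `Gal(E/F)` fixing `L ∩ C` elementwise equals `Gal(E/L)`. -/
theorem fixes_inter_subgroup_iff_fixes_intermediateField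
    (q p e : ℕ) (hp : Nat.Prime p) (hq : q = 2 ^ p - 1) [Fact (Nat.Prime q)]
    (he : 1 < e) (heven : Even e)
    (E : Type) [Field E] [Fintype E] [Algebra (ZMod q) E]
    (hcard : Fintype.card E = q ^ e)
    (C : Subgroup Eˣ)
    (hCindex : ∀ r : ℕ, r.Prime → r ∣ C.index → r ∣ q - 1)
    (hC4 : ¬ (4 ∣ Nat.card C))
    (L : IntermediateField (ZMod q) E) (hL : Nat.card L ≠ q ^ 2)
    (τ : E ≃ₐ[ZMod q] E) :
    (∀ x : Eˣ, x ∈ C → (x : E) ∈ L → τ (x : E) = (x : E)) ↔ (∀ y ∈ L, τ y = y) := by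
  refine ⟨fun h => ?_, fun h x _ hx => h x hx⟩
  have hq2 : 3 ≤ q ∧ Odd q := by
    have h4 : 2 ^ 2 ≤ 2 ^ p := Nat.pow_le_pow_right (by norm_num) hp.two_le
    obtain ⟨a, ha⟩ := dvd_pow_self 2 hp.ne_zero
    refine ⟨by omega, a - 1, by omega⟩
  -- `K` is the subfield of `L` fixed by `τ`; the claim is `K = L`.
  let K : IntermediateField (ZMod q) E := L ⊓ IntermediateField.fixedField (Subgroup.zpowers τ)
  have hK : ∀ y, y ∈ L → τ y = y → y ∈ K := by
    intro y hy hτ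
    refine ⟨hy, ?_⟩
    change y ∈ IntermediateField.fixedField (Subgroup.zpowers τ)
    rw [IntermediateField.mem_fixedField_iff]
    intro f hf
    have : Subgroup.zpowers τ ≤ MulAction.stabilizer (E ≃ₐ[ZMod q] E) y := by
      rw [Subgroup.zpowers_le]
      exact hτ
    exact this hf
  have hKL : K ≤ L := inf_le_left
  have hKτ : ∀ y ∈ K, τ y = y := fun y hy =>
    (IntermediateField.mem_fixedField_iff _ _).1 hy.2 τ (Subgroup.mem_zpowers τ)
  suffices hfin : Module.finrank (ZMod q) L ≤ Module.finrank (ZMod q) K by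
    have := IntermediateField.eq_of_le_of_finrank_le hKL hfin
    intro y hy
    exact hKτ y (this ▸ hy)
  have hcardL : Nat.card L = q ^ Module.finrank (ZMod q) L := by
    rw [Module.natCard_eq_pow_finrank (K := ZMod q), Nat.card_zmod]
  have hcardK : Nat.card K = q ^ Module.finrank (ZMod q) K := by
    rw [Module.natCard_eq_pow_finrank (K := ZMod q), Nat.card_zmod]
  clear_value K
  by_contra hlt
  have hm : Module.finrank (ZMod q) L ≠ 2 := fun h2 => hL (by rw [hcardL, h2])
  have hdvd : Module.finrank (ZMod q) K ∣ Module.finrank (ZMod q) L :=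
    IntermediateField.finrank_dvd_of_le_right hKL
  have hpos : 0 < Module.finrank (ZMod q) K := Module.finrank_pos
  rw [not_le] at hlt
  refine absurd ?_ (not_dvd_mul_pow_sub_one hq2.1 hq2.2 hpos hdvd hlt hm hCindex)
  -- A generator `g` of `Lˣ` has `g ^ [Eˣ : C]` in `L ∩ C`, hence in `K`.
  obtain ⟨g, hg⟩ := IsCyclic.exists_ofOrder_eq_natCard (α := Lˣ)
  rw [Nat.card_units, hcardL] at hg
  rw [← hg, ← hcardK]
  apply orderOf_dvd_of_pow_eq_one
  let x : Eˣ := Units.map (algebraMap L E : L →* E) g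
  have hxL : ((x ^ C.index : Eˣ) : E) ∈ L := by
    have : ((x ^ C.index : Eˣ) : E) = ((g ^ C.index : Lˣ) : L) := by simp [x]
    rw [this]
    exact SetLike.coe_mem _
  have hxK := hK _ hxL (h _ (C.pow_index_mem x) hxL)
  have hone : ∀ z : E, z ∈ K → z ≠ 0 → z ^ (Nat.card K - 1) = 1 := by
    intro z hz hz0
    have := Fintype.ofFinite K
    rw [Nat.card_eq_fintype_card]
    exact congrArg Subtype.val (FiniteField.pow_card_sub_one_eq_one (⟨z, hz⟩ : K)
      fun h0 => hz0 (congrArg Subtype.val h0))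
  have hone' := hone _ hxK (x ^ C.index).ne_zero
  apply Units.ext
  apply Subtype.ext
  simpa [x, pow_mul] using hone'
end
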